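/- Suppose a PbP optimal K-tuple γ^{(K),o} exists. Then for each station k, the minimization in the dynamic programming equations of Theorem 3(1.1) is achieved within the class of semi-separated strategies 𝒰^{k,s-sep} ⊆ 𝒰^k: the optimal actions have the form u_n^{k,o} = γ_n^{k,o}(Ξ_n^k[i_n^k], δ_n^{(K)}) at the terminal time and u_t^{k,o} = γ_t^{k,o}(Ξ_t^k[i_t^k], δ_t^{(K)}, λ_t^k) for t ∈ {1,…,n−1}; i.e., the triple (Ξ_t^k[I_t^k], Δ_t^{(K)}, Λ_t^k) is a sufficient statistic for the PbP optimal strategy of station k. -/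

import Mathlib

/-!
Decentralized stochastic network with `T`-step delayed sharing information patterns
(canonical finite-path-space formalization).

Times are 0-based: the paper's horizon `{1,…,n}` is encoded as `{0,…,n}` here
(so the paper's terminal time `n` is `n`, and paper time `t` corresponds to index `t-1`).

The sample space is the (finite) space of state/observation trajectories; given a
strategy profile the actions are determined recursively, and the probability of a
trajectory is the product of the Markovian kernels.  All posteriors (the private
posterior `Ξ` and the centralized posteriors `Π`, `Θ`) are elementary conditional
probabilities on this finite space.
-/

open Finset
open scoped BigOperators Classical

namespace DelayedSharing

/-- Canonical sample space: trajectories of states and observations over times `0,…,n`. -/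
abbrev Traj (n : ℕ) (X : Type) {K : ℕ} (Y : Fin K → Type) : Type :=
  (Fin (n + 1) → X) × (Fin (n + 1) → ∀ k, Y k)

/-- Clamped index into the horizon `{0,…,n}`. -/
def idx (n t : ℕ) : Fin (n + 1) := ⟨min t n, Nat.lt_succ_of_le (Nat.min_le_right t n)⟩

/-- A strategy profile: station `k`'s map, at each time, from full observation/action
histories to an action in the action space `U k`.  Admissibility (below) restricts the
dependence to the `T`-step delayed sharing information pattern `I_t^k`. -/
abbrev Strat {K : ℕ} (Y U : Fin K → Type) : Type :=
  ∀ k : Fin K, ℕ → (ℕ → ∀ j, Y j) → (ℕ → ∀ j, U j) → U k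

/-- A strategy of the single station `k`. -/
abbrev SStrat {K : ℕ} (Y U : Fin K → Type) (k : Fin K) : Type :=
  ℕ → (ℕ → ∀ j, Y j) → (ℕ → ∀ j, U j) → U k

variable {X : Type} {K : ℕ} {Y U : Fin K → Type}

def stateAt {n : ℕ} (ω : Traj n X Y) (t : ℕ) : X := ω.1 (idx n t)

def obsAt {n : ℕ} (ω : Traj n X Y) (t : ℕ) (k : Fin K) : Y k := ω.2 (idx n t) k

/-- `γ` is admissible for the `T`-step delayed sharing pattern: `γ k t` depends only on
`I_t^k = {Δ_t^{(K)}, Λ_t^k}`, i.e. on all stations' observations/actions up to time `t-T`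
(0-based: times `s` with `s + T ≤ t`), own observations up to `t` and own actions up to
`t-1`. -/
def Admissible (T : ℕ) (γ : Strat Y U) : Prop :=
  ∀ (k : Fin K) (t : ℕ) (y y' : ℕ → ∀ j, Y j) (u u' : ℕ → ∀ j, U j),
    (∀ s j, s + T ≤ t → y s j = y' s j) →
    (∀ s j, s + T ≤ t → u s j = u' s j) →
    (∀ s, s ≤ t → y s k = y' s k) →
    (∀ s, s < t → u s k = u' s k) →
    γ k t y u = γ k t y' u'

/-- Admissibility of a single station's strategy. -/
def SAdmissible (T : ℕ) (k : Fin K) (g : SStrat Y U k) : Prop :=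
  ∀ (t : ℕ) (y y' : ℕ → ∀ j, Y j) (u u' : ℕ → ∀ j, U j),
    (∀ s j, s + T ≤ t → y s j = y' s j) →
    (∀ s j, s + T ≤ t → u s j = u' s j) →
    (∀ s, s ≤ t → y s k = y' s k) →
    (∀ s, s < t → u s k = u' s k) →
    g t y u = g t y' u'

/-- Replace station `k`'s strategy in the profile `γ` by `g`. -/
def updStrat (γ : Strat Y U) (k : Fin K) (g : SStrat Y U k) : Strat Y U :=
  fun j => if h : j = k then (by subst h; exact g) else γ j

/-- Station `k` uses `g₁` before time `t` and `g₂` from time `t` on. -/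
def splice {k : Fin K} (g₁ g₂ : SStrat Y U k) (t : ℕ) : SStrat Y U k :=
  fun τ => if τ < t then g₁ τ else g₂ τ

variable [∀ k, Nonempty (U k)]

/-- The actions at times `< t` generated recursively by the strategy profile `γ` from the
observation path `y`. -/
noncomputable def actUpto (γ : Strat Y U) (y : ℕ → ∀ j, Y j) : ℕ → ℕ → ∀ j, U j
  | 0 => fun _ j => Classical.arbitrary (U j)
  | t + 1 => fun s => if s = t then (fun j => γ j t y (actUpto γ y t)) else actUpto γ y t s

/-- The action profile at time `t` generated by `γ` from the observation path `y`. -/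
noncomputable def act (γ : Strat Y U) (y : ℕ → ∀ j, Y j) (t : ℕ) : ∀ j, U j :=
  fun j => γ j t y (actUpto γ y t)

/-- The realized action profile along a trajectory. -/
noncomputable def actAt {n : ℕ} (γ : Strat Y U) (ω : Traj n X Y) (t : ℕ) : ∀ j, U j :=
  act γ (fun s => ω.2 (idx n s)) t

/-- The Markovian kernels and the per-stage cost of the decentralized network (0-based):
`prior` is the PMF of the initial state; `obs0 k` the PMF of station `k`'s initial
observation given the initial state; `trans t` the transition PMF from time `t` to `t+1`
given the action profile at time `t`; `obs t k` the PMF of station `k`'s observation at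
time `t+1` given the state at `t+1` and the action profile at time `t` (the observations
of the stations being conditionally independent given these); `cost t` the per-stage
cost `ℓ(t,·,·)`. -/
structure Kernels (X : Type) {K : ℕ} (Y U : Fin K → Type) where
  prior : X → ℝ
  obs0 : ∀ k : Fin K, X → Y k → ℝ
  trans : ℕ → X → (∀ j, U j) → X → ℝ
  obs : ℕ → ∀ k : Fin K, X → (∀ j, U j) → Y k → ℝ
  cost : ℕ → X → (∀ j, U j) → ℝ

variable [Fintype X] [∀ k, Fintype (Y k)]

/-- All the kernels are genuine probability mass functions. -/
def Kernels.IsPMF (M : Kernels X Y U) : Prop :=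
  (∀ x, 0 ≤ M.prior x) ∧ (∑ x, M.prior x) = 1 ∧
  (∀ (k : Fin K) x, (∀ y, 0 ≤ M.obs0 k x y) ∧ (∑ y, M.obs0 k x y) = 1) ∧
  (∀ t x u, (∀ x', 0 ≤ M.trans t x u x') ∧ (∑ x', M.trans t x u x') = 1) ∧
  (∀ t (k : Fin K) x u, (∀ y, 0 ≤ M.obs t k x u y) ∧ (∑ y, M.obs t k x u y) = 1)

/-- The probability of a trajectory under the strategy profile `γ`: the product of the
Markovian kernels along the path, the actions being generated by `γ`. -/
noncomputable def prob (n : ℕ) (M : Kernels X Y U) (γ : Strat Y U) (ω : Traj n X Y) : ℝ :=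
  M.prior (stateAt ω 0) * (∏ k, M.obs0 k (stateAt ω 0) (obsAt ω 0 k)) *
    ∏ t ∈ Finset.range n,
      (M.trans t (stateAt ω t) (actAt γ ω t) (stateAt ω (t + 1)) *
        ∏ k, M.obs t k (stateAt ω (t + 1)) (actAt γ ω t) (obsAt ω (t + 1) k))

/-- `ℙ^γ(A)` on the canonical finite path space. -/
noncomputable def Pr (n : ℕ) (M : Kernels X Y U) (γ : Strat Y U) (A : Traj n X Y → Prop) : ℝ :=
  ∑ ω : Traj n X Y, if A ω then prob n M γ ω else 0

/-- Conditional probability `ℙ^γ(A | B)`. -/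
noncomputable def condPr (n : ℕ) (M : Kernels X Y U) (γ : Strat Y U)
    (A B : Traj n X Y → Prop) : ℝ :=
  Pr n M γ (fun ω => A ω ∧ B ω) / Pr n M γ B

/-- The expected total cost `J_n(γ) = 𝔼^γ [Σ_t ℓ(t, X_t, U_t^{(K)})]`. -/
noncomputable def J (n : ℕ) (M : Kernels X Y U) (γ : Strat Y U) : ℝ :=
  ∑ ω : Traj n X Y, prob n M γ ω *
    ∑ t ∈ Finset.range (n + 1), M.cost t (stateAt ω t) (actAt γ ω t)

/-- The conditional cost-to-go from time `t` given the event `B`: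
`𝔼^γ [Σ_{τ=t}^n ℓ(τ, X_τ, U_τ^{(K)}) | B]`. -/
noncomputable def Jcond (n : ℕ) (M : Kernels X Y U) (γ : Strat Y U) (t : ℕ)
    (B : Traj n X Y → Prop) : ℝ :=
  (∑ ω : Traj n X Y,
      if B ω then prob n M γ ω * ∑ τ ∈ Finset.Icc t n, M.cost τ (stateAt ω τ) (actAt γ ω τ)
      else 0) / Pr n M γ B

/-- Person-by-person optimality of the profile `γo`. -/
noncomputable def PbPOptimal (n T : ℕ) (M : Kernels X Y U) (γo : Strat Y U) : Prop :=
  Admissible T γo ∧ ∀ (k : Fin K) (g : SStrat Y U k),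
    Admissible T (updStrat γo k g) → J n M γo ≤ J n M (updStrat γo k g)

/-- Person-by-person optimality of `γo` within the class `P` of strategy profiles. -/
noncomputable def PbPOptimalIn (n T : ℕ) (M : Kernels X Y U) (P : Strat Y U → Prop)
    (γo : Strat Y U) : Prop :=
  Admissible T γo ∧ P γo ∧ ∀ (k : Fin K) (g : SStrat Y U k),
    Admissible T (updStrat γo k g) → P (updStrat γo k g) →
      J n M γo ≤ J n M (updStrat γo k g)

/-! ### Information events: realizations of `I_t^k`, `Δ_t^{(K)}`, `Λ_t^k` -/

/-- The event `{I_t^k = i_t^k}`, where the realization `i_t^k = {δ_t^{(K)}, λ_t^k}` is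
recorded by total functions `iy, iu` (only the coordinates of the information pattern
matter). -/
def InfoEq {n : ℕ} (T : ℕ) (γ : Strat Y U) (k : Fin K) (t : ℕ)
    (iy : ℕ → ∀ j, Y j) (iu : ℕ → ∀ j, U j) (ω : Traj n X Y) : Prop :=
  (∀ s j, s + T ≤ t → obsAt ω s j = iy s j) ∧
  (∀ s j, s + T ≤ t → actAt γ ω s j = iu s j) ∧
  (∀ s, s ≤ t → obsAt ω s k = iy s k) ∧
  (∀ s, s < t → actAt γ ω s k = iu s k)

/-- The event `{Δ_t^{(K)} = δ_t^{(K)}}` (common/shared data). -/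
def CommonEq {n : ℕ} (T : ℕ) (γ : Strat Y U) (t : ℕ)
    (δy : ℕ → ∀ j, Y j) (δu : ℕ → ∀ j, U j) (ω : Traj n X Y) : Prop :=
  (∀ s j, s + T ≤ t → obsAt ω s j = δy s j) ∧
  (∀ s j, s + T ≤ t → actAt γ ω s j = δu s j)

/-- The event `{Λ_t^{-k} = λ_t^{-k}}` (private data of the other stations). -/
def PrivOthersEq {n : ℕ} (T : ℕ) (γ : Strat Y U) (k : Fin K) (t : ℕ)
    (ly : ℕ → ∀ j, Y j) (lu : ℕ → ∀ j, U j) (ω : Traj n X Y) : Prop :=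
  (∀ s j, j ≠ k → s ≤ t → t < s + T → obsAt ω s j = ly s j) ∧
  (∀ s j, j ≠ k → s < t → t < s + T → actAt γ ω s j = lu s j)

/-- The event `{Λ_t^{(K)} = λ_t^{(K)}}` (private data of all stations). -/
def PrivAllEq {n : ℕ} (T : ℕ) (γ : Strat Y U) (t : ℕ)
    (ly : ℕ → ∀ j, Y j) (lu : ℕ → ∀ j, U j) (ω : Traj n X Y) : Prop :=
  (∀ s j, s ≤ t → t < s + T → obsAt ω s j = ly s j) ∧
  (∀ s j, s < t → t < s + T → actAt γ ω s j = lu s j)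

/-- Agreement of two trajectories on the common data `Δ_t^{(K)}`. -/
def CommonAgree {n : ℕ} (T : ℕ) (γ : Strat Y U) (t : ℕ) (ω ω' : Traj n X Y) : Prop :=
  (∀ s (j : Fin K), s + T ≤ t → obsAt ω s j = obsAt ω' s j) ∧
  (∀ s (j : Fin K), s + T ≤ t → actAt γ ω s j = actAt γ ω' s j)

/-- Agreement of two trajectories on station `k`'s private data `Λ_t^k`. -/
def PrivAgree {n : ℕ} (T : ℕ) (γ : Strat Y U) (k : Fin K) (t : ℕ) (ω ω' : Traj n X Y) : Prop :=
  (∀ s, s ≤ t → t < s + T → obsAt ω s k = obsAt ω' s k) ∧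
  (∀ s, s < t → t < s + T → actAt γ ω s k = actAt γ ω' s k)

/-- Agreement of two trajectories on station `k`'s information `I_t^k`. -/
def InfoAgree {n : ℕ} (T : ℕ) (γ : Strat Y U) (k : Fin K) (t : ℕ) (ω ω' : Traj n X Y) : Prop :=
  CommonAgree T γ t ω ω' ∧
  (∀ s, s ≤ t → obsAt ω s k = obsAt ω' s k) ∧
  (∀ s, s < t → actAt γ ω s k = actAt γ ω' s k)

/-! ### Posteriors -/

/-- The private posterior `Ξ_t^k[i_t^k](x, λ_t^{-k})
 = ℙ^γ(X_t = x, Λ_t^{-k} = λ_t^{-k} | I_t^k = i_t^k)`. -/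
noncomputable def Xi (n T : ℕ) (M : Kernels X Y U) (γ : Strat Y U) (k : Fin K) (t : ℕ)
    (iy : ℕ → ∀ j, Y j) (iu : ℕ → ∀ j, U j) (x : X)
    (ly : ℕ → ∀ j, Y j) (lu : ℕ → ∀ j, U j) : ℝ :=
  condPr n M γ (fun ω => stateAt ω t = x ∧ PrivOthersEq T γ k t ly lu ω)
    (InfoEq T γ k t iy iu)

/-- The centralized posterior `Π_t^{(K)}[δ_t^{(K)}](x) = ℙ^γ(X_{t-T} = x | Δ_t^{(K)} = δ)`. -/
noncomputable def PiPost (n T : ℕ) (M : Kernels X Y U) (γ : Strat Y U) (t : ℕ)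
    (δy : ℕ → ∀ j, Y j) (δu : ℕ → ∀ j, U j) (x : X) : ℝ :=
  condPr n M γ (fun ω => stateAt ω (t - T) = x) (CommonEq T γ t δy δu)

/-- The centralized posterior
`Θ_t^{γ}[δ_t^{(K)}](x, λ_t^{(K)}) = ℙ^γ(X_t = x, Λ_t^{(K)} = λ | Δ_t^{(K)} = δ)`. -/
noncomputable def ThetaPost (n T : ℕ) (M : Kernels X Y U) (γ : Strat Y U) (t : ℕ)
    (δy : ℕ → ∀ j, Y j) (δu : ℕ → ∀ j, U j) (x : X)
    (ly : ℕ → ∀ j, Y j) (lu : ℕ → ∀ j, U j) : ℝ :=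
  condPr n M γ (fun ω => stateAt ω t = x ∧ PrivAllEq T γ t ly lu ω) (CommonEq T γ t δy δu)

/-- The realization `I_t^k = i_t^k` has positive probability under `γ`. -/
noncomputable def PosInfo (n T : ℕ) (M : Kernels X Y U) (γ : Strat Y U) (k : Fin K) (t : ℕ)
    (iy : ℕ → ∀ j, Y j) (iu : ℕ → ∀ j, U j) : Prop :=
  0 < Pr n M γ (InfoEq T γ k t iy iu)

/-- The random private posterior `Ξ_t^k[I_t^k]` evaluated along the trajectory `ω`. -/
noncomputable def XiAt (n T : ℕ) (M : Kernels X Y U) (γ : Strat Y U) (k : Fin K) (t : ℕ)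
    (ω : Traj n X Y) : X → (ℕ → ∀ j, Y j) → (ℕ → ∀ j, U j) → ℝ :=
  fun x ly lu => Xi n T M γ k t (fun s => ω.2 (idx n s)) (actAt γ ω) x ly lu

/-! ### Finite parametrization of private realizations -/

variable [∀ k, DecidableEq (Y k)] [∀ k, DecidableEq (U k)] [∀ k, Fintype (U k)]
variable [∀ k, Nonempty (Y k)]

/-- Canonical (finite) set of realizations of `Λ_t^{-k}`: pairs of functions supported on
the private windows of the stations `j ≠ k` (observations at times `s ≤ t` with
`t < s + T`; actions at times `s < t` with `t < s + T`) and equal to a fixed default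
outside. -/
noncomputable def privSet (n T : ℕ) (k : Fin K) (t : ℕ) :
    Finset ((Fin (n + 1) → ∀ j, Y j) × (Fin (n + 1) → ∀ j, U j)) :=
  Finset.univ.filter (fun p =>
    (∀ (s : Fin (n + 1)) (j : Fin K), ¬(j ≠ k ∧ s.1 ≤ t ∧ t < s.1 + T) →
        p.1 s j = Classical.arbitrary (Y j)) ∧
    (∀ (s : Fin (n + 1)) (j : Fin K), ¬(j ≠ k ∧ s.1 < t ∧ t < s.1 + T) →
        p.2 s j = Classical.arbitrary (U j)))

/-- Canonical (finite) set of realizations of `Λ_t^{(K)}` (all stations). -/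
noncomputable def privAllSet (n T t : ℕ) :
    Finset ((Fin (n + 1) → ∀ j, Y j) × (Fin (n + 1) → ∀ j, U j)) :=
  Finset.univ.filter (fun p =>
    (∀ (s : Fin (n + 1)) (j : Fin K), ¬(s.1 ≤ t ∧ t < s.1 + T) →
        p.1 s j = Classical.arbitrary (Y j)) ∧
    (∀ (s : Fin (n + 1)) (j : Fin K), ¬(s.1 < t ∧ t < s.1 + T) →
        p.2 s j = Classical.arbitrary (U j)))

/-- View the observation part of a private realization as a (ℕ-indexed) realization
function. -/
def pWinY {n : ℕ} (p : (Fin (n + 1) → ∀ j, Y j) × (Fin (n + 1) → ∀ j, U j)) :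
    ℕ → ∀ j, Y j := fun s => p.1 (idx n s)

/-- View the action part of a private realization as a realization function. -/
def pWinU {n : ℕ} (p : (Fin (n + 1) → ∀ j, Y j) × (Fin (n + 1) → ∀ j, U j)) :
    ℕ → ∀ j, U j := fun s => p.2 (idx n s)

/-- The observation history obtained by combining the realized information `iy` of
station `k` (own and common coordinates) with the private window `py` of the other
stations. -/
def mixObs {n : ℕ} (T t : ℕ) (k : Fin K) (iy : ℕ → ∀ j, Y j)
    (py : Fin (n + 1) → ∀ j, Y j) : ℕ → ∀ j, Y j :=
  fun s j => if j = k ∨ s + T ≤ t then iy s j else py (idx n s) j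

/-- The action history obtained by combining the realized information `iu` of station `k`
with the private window `pu` of the other stations. -/
def mixAct {n : ℕ} (T t : ℕ) (k : Fin K) (iu : ℕ → ∀ j, U j)
    (pu : Fin (n + 1) → ∀ j, U j) : ℕ → ∀ j, U j :=
  fun s j => if j = k ∨ s + T ≤ t then iu s j else pu (idx n s) j

/-- The action profile at time `t`: station `k` applies `u`, while each other station `j`
applies `γ_t^j(δ_t^{(K)}, λ_t^j)`, its strategy evaluated at the common data recorded in
`(iy, iu)` and its private data recorded in the window `p`. -/
noncomputable def prof {n : ℕ} (T t : ℕ) (γ : Strat Y U) (k : Fin K)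
    (iy : ℕ → ∀ j, Y j) (iu : ℕ → ∀ j, U j)
    (p : (Fin (n + 1) → ∀ j, Y j) × (Fin (n + 1) → ∀ j, U j)) (u : U k) : ∀ j, U j :=
  Function.update (fun j => γ j t (mixObs T t k iy p.1) (mixAct T t k iu p.2)) k u

/-- The observation history of all stations obtained from the common data `δy` and the
private windows `py` of all stations. -/
def mixObsAll {n : ℕ} (T t : ℕ) (δy : ℕ → ∀ j, Y j)
    (py : Fin (n + 1) → ∀ j, Y j) : ℕ → ∀ j, Y j :=
  fun s j => if s + T ≤ t then δy s j else py (idx n s) j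

/-- The action history of all stations obtained from the common data `δu` and the private
windows `pu` of all stations. -/
def mixActAll {n : ℕ} (T t : ℕ) (δu : ℕ → ∀ j, U j)
    (pu : Fin (n + 1) → ∀ j, U j) : ℕ → ∀ j, U j :=
  fun s j => if s + T ≤ t then δu s j else pu (idx n s) j

/-- The action profile `u_t^{(K)} = {γ_t^j(δ_t^{(K)}, λ_t^j)}_{j=1}^K`. -/
noncomputable def profAll {n : ℕ} (T t : ℕ) (γ : Strat Y U)
    (δy : ℕ → ∀ j, Y j) (δu : ℕ → ∀ j, U j)
    (p : (Fin (n + 1) → ∀ j, Y j) × (Fin (n + 1) → ∀ j, U j)) : ∀ j, U j :=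
  fun j => γ j t (mixObsAll T t δy p.1) (mixActAll T t δu p.2)

/-- The realization of `I_{t+1}^k` obtained from `i_t^k = (iy, iu)`, the new own
observation `y'` at time `t+1` and the private window `p` of the other stations. -/
noncomputable def newObs {n : ℕ} (T t : ℕ) (k : Fin K) (iy : ℕ → ∀ j, Y j)
    (p : (Fin (n + 1) → ∀ j, Y j) × (Fin (n + 1) → ∀ j, U j)) (y' : Y k) : ℕ → ∀ j, Y j :=
  fun s => if s = t + 1 then Function.update (fun j => iy s j) k y' else mixObs T t k iy p.1 s

/-- The action part of the realization of `I_{t+1}^k`: at time `t` station `k` applies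
`u` and the others apply their strategies. -/
noncomputable def newAct {n : ℕ} (T t : ℕ) (γ : Strat Y U) (k : Fin K)
    (iy : ℕ → ∀ j, Y j) (iu : ℕ → ∀ j, U j)
    (p : (Fin (n + 1) → ∀ j, Y j) × (Fin (n + 1) → ∀ j, U j)) (u : U k) : ℕ → ∀ j, U j :=
  fun s => if s = t then prof T t γ k iy iu p u else mixAct T t k iu p.2 s

/-! ### Dynamic programming equations (Theorem 3 (1.1)) -/

/-- The expected stage cost at time `t` under the private posterior `Ξ_t^k[i_t^k]` when
station `k` applies `u` and the other stations apply their strategies: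
`Σ_{x_t, λ_t^{-k}} ℓ(t, x_t, u_t^k, γ_t^{-k}(δ_t^{(K)}, λ_t^{-k})) Ξ_t^k[i_t^k](x_t, λ_t^{-k})`. -/
noncomputable def dpStage (n T : ℕ) (M : Kernels X Y U) (γ : Strat Y U) (k : Fin K)
    (t : ℕ) (iy : ℕ → ∀ j, Y j) (iu : ℕ → ∀ j, U j) (u : U k) : ℝ :=
  ∑ x : X, ∑ p ∈ privSet n T k t,
    M.cost t x (prof T t γ k iy iu p u) * Xi n T M γ k t iy iu x (pWinY p) (pWinU p)

/-- The expected continuation value: the function `V` at time `t+1`, evaluated at the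
updated realization `(i_t^k, y_{t+1}^k, u_t^k, y_{t-T+1}^{-k}, u_{t-T+1}^{-k})`, averaged
with the kernel
`q_{t+1}^k(dy_{t+1}^k | x_{t+1}, u) s_{t+1}(dx_{t+1} | x_t, u) Ξ_t^k[i_t^k](dx_t, dλ_t^{-k})`. -/
noncomputable def dpCont (n T : ℕ) (M : Kernels X Y U) (γ : Strat Y U) (k : Fin K)
    (t : ℕ) (iy : ℕ → ∀ j, Y j) (iu : ℕ → ∀ j, U j)
    (V : ℕ → (ℕ → ∀ j, Y j) → (ℕ → ∀ j, U j) → ℝ) (u : U k) : ℝ :=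
  ∑ y' : Y k, ∑ x : X, ∑ x' : X, ∑ p ∈ privSet n T k t,
    V (t + 1) (newObs T t k iy p y') (newAct T t γ k iy iu p u) *
      M.obs t k x' (prof T t γ k iy iu p u) y' *
      M.trans t x (prof T t γ k iy iu p u) x' *
      Xi n T M γ k t iy iu x (pWinY p) (pWinU p)

/-- `V` satisfies the dynamic programming equations of Theorem 3 (1.1) for station `k`
(with the other stations' strategies fixed to those of `γ`): at the terminal time the
minimum over the action space of the expected stage cost, and before that the minimum
over the action space of expected stage cost plus expected continuation value, on every
realization of `I_t^k` of positive probability. -/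
noncomputable def SatisfiesDP (n T : ℕ) (M : Kernels X Y U) (γ : Strat Y U) (k : Fin K)
    (V : ℕ → (ℕ → ∀ j, Y j) → (ℕ → ∀ j, U j) → ℝ) : Prop :=
  (∀ iy iu, PosInfo n T M γ k n iy iu →
      V n iy iu = ⨅ u : U k, dpStage n T M γ k n iy iu u) ∧
  (∀ t iy iu, t < n → PosInfo n T M γ k t iy iu →
      V t iy iu = ⨅ u : U k, (dpStage n T M γ k t iy iu u + dpCont n T M γ k t iy iu V u))

/-- Station `k`'s strategy in `γ` attains, at every realization of positive probability,
the minimum in the dynamic programming equations with value function `V`. -/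
noncomputable def AttainsDP (n T : ℕ) (M : Kernels X Y U) (γ : Strat Y U) (k : Fin K)
    (V : ℕ → (ℕ → ∀ j, Y j) → (ℕ → ∀ j, U j) → ℝ) : Prop :=
  (∀ iy iu, PosInfo n T M γ k n iy iu →
      V n iy iu = dpStage n T M γ k n iy iu (γ k n iy iu)) ∧
  (∀ t iy iu, t < n → PosInfo n T M γ k t iy iu →
      V t iy iu = dpStage n T M γ k t iy iu (γ k t iy iu) +
        dpCont n T M γ k t iy iu V (γ k t iy iu))

/-- The value process `𝒱_t^{γ^{k,o}, γ^{-k,o}}(i_t^k)`: the infimum, over admissible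
strategies of station `k` used from time `t` on (station `k` using `γo`'s strategy before
`t` and the other stations using `γo` throughout), of the conditional cost-to-go given
`I_t^k = i_t^k`. -/
noncomputable def Vval (n T : ℕ) (M : Kernels X Y U) (γo : Strat Y U) (k : Fin K) (t : ℕ)
    (iy : ℕ → ∀ j, Y j) (iu : ℕ → ∀ j, U j) : ℝ :=
  sInf { r : ℝ | ∃ g : SStrat Y U k,
    Admissible T (updStrat γo k (splice (γo k) g t)) ∧
    r = Jcond n M (updStrat γo k (splice (γo k) g t)) t
          (InfoEq T (updStrat γo k (splice (γo k) g t)) k t iy iu) }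

/-! ### Structured strategy classes -/

/-- Semi-separated strategies: for every station `k` and time `t`, the action depends on
the information `i_t^k` only through `(Ξ_t^k[i_t^k], δ_t^{(K)}, λ_t^k)`. -/
noncomputable def SemiSeparated (n T : ℕ) (M : Kernels X Y U) (γ : Strat Y U) : Prop :=
  ∀ (k : Fin K) (t : ℕ) (y y' : ℕ → ∀ j, Y j) (u u' : ℕ → ∀ j, U j),
    (∀ x ly lu, Xi n T M γ k t y u x ly lu = Xi n T M γ k t y' u' x ly lu) →
    (∀ s j, s + T ≤ t → y s j = y' s j) →
    (∀ s j, s + T ≤ t → u s j = u' s j) →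
    (∀ s, s ≤ t → t < s + T → y s k = y' s k) →
    (∀ s, s < t → t < s + T → u s k = u' s k) →
    γ k t y u = γ k t y' u'

/-- Separated strategies (with the centralized posterior `Π`): the action depends on
`i_t^k` only through `(Ξ_t^k[i_t^k], Π_t^{(K)}[δ_t^{(K)}], λ_t^k)`. -/
noncomputable def SeparatedPi (n T : ℕ) (M : Kernels X Y U) (γ : Strat Y U) : Prop :=
  ∀ (k : Fin K) (t : ℕ) (y y' : ℕ → ∀ j, Y j) (u u' : ℕ → ∀ j, U j),
    (∀ x ly lu, Xi n T M γ k t y u x ly lu = Xi n T M γ k t y' u' x ly lu) →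
    (∀ x, PiPost n T M γ t y u x = PiPost n T M γ t y' u' x) →
    (∀ s, s ≤ t → t < s + T → y s k = y' s k) →
    (∀ s, s < t → t < s + T → u s k = u' s k) →
    γ k t y u = γ k t y' u'

/-- Separated strategies (with the centralized posterior `Θ`): the action depends on
`i_t^k` only through `(Ξ_t^k[i_t^k], Θ_t^{γ}[δ_t^{(K)}], λ_t^k)`. -/
noncomputable def SeparatedTheta (n T : ℕ) (M : Kernels X Y U) (γ : Strat Y U) : Prop :=
  ∀ (k : Fin K) (t : ℕ) (y y' : ℕ → ∀ j, Y j) (u u' : ℕ → ∀ j, U j),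
    (∀ x ly lu, Xi n T M γ k t y u x ly lu = Xi n T M γ k t y' u' x ly lu) →
    (∀ x ly lu, ThetaPost n T M γ t y u x ly lu = ThetaPost n T M γ t y' u' x ly lu) →
    (∀ s, s ≤ t → t < s + T → y s k = y' s k) →
    (∀ s, s < t → t < s + T → u s k = u' s k) →
    γ k t y u = γ k t y' u'

/-- Information-state strategies: the action depends on `i_t^k` only through the pair
`(Ξ_t^k[i_t^k], Θ_t^{γ}[δ_t^{(K)}])`. -/
noncomputable def InfoStateTheta (n T : ℕ) (M : Kernels X Y U) (γ : Strat Y U) : Prop :=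
  ∀ (k : Fin K) (t : ℕ) (y y' : ℕ → ∀ j, Y j) (u u' : ℕ → ∀ j, U j),
    (∀ x ly lu, Xi n T M γ k t y u x ly lu = Xi n T M γ k t y' u' x ly lu) →
    (∀ x ly lu, ThetaPost n T M γ t y u x ly lu = ThetaPost n T M γ t y' u' x ly lu) →
    γ k t y u = γ k t y' u'

/-!
Against fixed strategies of the other stations, station `k` has a best response, because the cost
of a profile only depends on its finite table of actions along trajectories.

At the terminal time, every best response may be modified to play a minimizer of the expected
stage cost under the posterior `Ξ_n^k[i_n^k]`.  By the tower property, the mean of that stage cost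
over `I_n^k` is `𝔼[ℓ(n, X_n, U_n)]`, so the modification costs nothing; and the stage cost only
involves `i_n^k` through `(Ξ_n^k[i_n^k], δ_n)`, hence so does the action chosen.  For `t < n` the
pair `(δ_t, λ_t^k)` already is all of `I_t^k`.

A best response also attains the value process: deviating from time `t` on at one single
realization of `I_t^k` changes the total cost only through the conditional cost-to-go at that
realization.  The dynamic programming equations for a strategy attaining the value process are
then the tower property together with the Markov property of the kernels.
-/

section FiniteSums

/-- A choice of minimizer of a real function on a finite nonempty type. -/
noncomputable def argmin {α : Type*} [Finite α] [Nonempty α] (f : α → ℝ) : α :=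
  Classical.choose (Finite.exists_min f)

theorem argmin_le {α : Type*} [Finite α] [Nonempty α] (f : α → ℝ) (a : α) : f (argmin f) ≤ f a :=
  Classical.choose_spec (Finite.exists_min f) a

theorem sum_prod_mul_apply {ι R : Type*} [Fintype ι] [DecidableEq ι] [CommSemiring R]
    {α : ι → Type*} [∀ i, Fintype (α i)] (p : ∀ i, α i → R) (k : ι)
    (hp : ∀ i, i ≠ k → ∑ a, p i a = 1) (φ : α k → R) :
    ∑ z : ∀ i, α i, (∏ i, p i (z i)) * φ (z k) = ∑ a, p k a * φ a := by
  set q := Function.update p k fun a => p k a * φ a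
  have hqk : q k = fun a => p k a * φ a := Function.update_self ..
  have hqi : ∀ i, i ≠ k → q i = p i := fun i hi => Function.update_of_ne hi ..
  have hprod : ∀ z : ∀ i, α i, (∏ i, p i (z i)) * φ (z k) = ∏ i, q i (z i) := by
    intro z
    rw [← Finset.mul_prod_erase _ _ (Finset.mem_univ k),
      ← Finset.mul_prod_erase _ _ (Finset.mem_univ k), hqk, mul_right_comm]
    congr 1
    exact Finset.prod_congr rfl fun i hi => by rw [hqi i (Finset.ne_of_mem_erase hi)]
  calc ∑ z : ∀ i, α i, (∏ i, p i (z i)) * φ (z k)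
      = ∏ i, ∑ a, q i a := by rw [Fintype.prod_sum]; exact Fintype.sum_congr _ _ hprod
    _ = ∑ a, q k a :=
        Fintype.prod_eq_single k fun i hi => by rw [hqi i hi, hp i hi]
    _ = ∑ a, p k a * φ a := by rw [hqk]

/-- The tower property of conditional expectation. -/
theorem sum_mul_classAverage {α : Type*} [Fintype α] {w : α → ℝ} (hw : ∀ a, 0 ≤ w a) (r : Setoid α)
    (f : α → ℝ) {B : α → Prop} (hB : ∀ a b, r a b → (B a ↔ B b)) :
    (∑ a, if B a then
        w a * ((∑ b, if r b a then w b * f b else 0) / ∑ b, if r b a then w b else 0) else 0) =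
      ∑ b, if B b then w b * f b else 0 := by
  set W : α → ℝ := fun a => ∑ b, if r b a then w b else 0
  have hWcongr : ∀ a b, r b a → W a = W b := fun a b hba =>
    Fintype.sum_congr _ _ fun c =>
      if_congr ⟨fun h => r.trans h (r.symm hba), fun h => r.trans h hba⟩ rfl rfl
  have hWsymm : ∀ b, ∑ a, (if r b a then w a else 0) = W b := fun b =>
    Fintype.sum_congr _ _ fun a => if_congr ⟨r.symm, r.symm⟩ rfl rfl
  have hW0 : ∀ b, W b = 0 → w b = 0 := fun b hb => by
    have := (Finset.sum_eq_zero_iff_of_nonneg fun c _ => by split_ifs <;> simp [hw]).1 hb b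
      (Finset.mem_univ b)
    rwa [if_pos (r.refl b)] at this
  calc (∑ a, if B a then w a * ((∑ b, if r b a then w b * f b else 0) / W a) else 0)
      = ∑ a, ∑ b, (if B b then w b * f b / W b else 0) * (if r b a then w a else 0) := by
        refine Fintype.sum_congr _ _ fun a => ?_
        by_cases hBa : B a
        · rw [if_pos hBa, Finset.sum_div, Finset.mul_sum]
          refine Fintype.sum_congr _ _ fun b => ?_
          by_cases hba : r b a
          · rw [if_pos hba, if_pos hba, if_pos ((hB b a hba).2 hBa), hWcongr a b hba]; ring
          · simp [hba]
        · rw [if_neg hBa, Finset.sum_eq_zero]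
          intro b _
          by_cases hba : r b a
          · rw [if_neg (mt (hB b a hba).1 hBa), zero_mul]
          · rw [if_neg hba, mul_zero]
    _ = ∑ b, (if B b then w b * f b / W b else 0) * W b := by
        rw [Finset.sum_comm]
        simp only [← Finset.mul_sum, hWsymm]
    _ = ∑ b, if B b then w b * f b else 0 := by
        refine Fintype.sum_congr _ _ fun b => ?_
        by_cases hb : W b = 0
        · simp [hW0 b hb]
        · rw [ite_mul, zero_mul, div_mul_cancel₀ _ hb]

end FiniteSums

section Information

variable {K : ℕ} {Y U : Fin K → Type} {T : ℕ} {k : Fin K} {t : ℕ}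
  {y y' y'' : ℕ → ∀ j, Y j} {u u' u'' : ℕ → ∀ j, U j}

/-- Two histories have the same information pattern `I_t^k`.  Admissibility of a strategy and the
events `InfoEq` both unfold to this relation. -/
def SameInfo (T : ℕ) (k : Fin K) (t : ℕ) (y : ℕ → ∀ j, Y j) (u : ℕ → ∀ j, U j)
    (y' : ℕ → ∀ j, Y j) (u' : ℕ → ∀ j, U j) : Prop :=
  (∀ s j, s + T ≤ t → y s j = y' s j) ∧
  (∀ s j, s + T ≤ t → u s j = u' s j) ∧
  (∀ s, s ≤ t → y s k = y' s k) ∧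
  (∀ s, s < t → u s k = u' s k)

namespace SameInfo

theorem refl (T : ℕ) (k : Fin K) (t : ℕ) (y : ℕ → ∀ j, Y j) (u : ℕ → ∀ j, U j) :
    SameInfo T k t y u y u :=
  ⟨fun _ _ _ => rfl, fun _ _ _ => rfl, fun _ _ => rfl, fun _ _ => rfl⟩

theorem symm (h : SameInfo T k t y u y' u') : SameInfo T k t y' u' y u :=
  ⟨fun s j hs => (h.1 s j hs).symm, fun s j hs => (h.2.1 s j hs).symm,
    fun s hs => (h.2.2.1 s hs).symm, fun s hs => (h.2.2.2 s hs).symm⟩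

theorem trans (h : SameInfo T k t y u y' u') (h' : SameInfo T k t y' u' y'' u'') :
    SameInfo T k t y u y'' u'' :=
  ⟨fun s j hs => (h.1 s j hs).trans (h'.1 s j hs),
    fun s j hs => (h.2.1 s j hs).trans (h'.2.1 s j hs),
    fun s hs => (h.2.2.1 s hs).trans (h'.2.2.1 s hs),
    fun s hs => (h.2.2.2 s hs).trans (h'.2.2.2 s hs)⟩

theorem mono {t' : ℕ} (htt' : t ≤ t') (h : SameInfo T k t' y u y' u') :
    SameInfo T k t y u y' u' :=
  ⟨fun s j hs => h.1 s j (hs.trans htt'), fun s j hs => h.2.1 s j (hs.trans htt'),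
    fun s hs => h.2.2.1 s (hs.trans htt'), fun s hs => h.2.2.2 s (hs.trans_le htt')⟩

theorem of_agree (hT : 1 ≤ T) (k : Fin K) (hy : ∀ s ≤ t, y s = y' s) (hu : ∀ s < t, u s = u' s) :
    SameInfo T k t y u y' u' :=
  ⟨fun s j hs => congrFun (hy s (by omega)) j, fun s j hs => congrFun (hu s (by omega)) j,
    fun s hs => congrFun (hy s hs) k, fun s hs => congrFun (hu s hs) k⟩

theorem of_common_of_window (hy : ∀ s j, s + T ≤ t → y s j = y' s j)
    (hu : ∀ s j, s + T ≤ t → u s j = u' s j)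
    (hyk : ∀ s, s ≤ t → t < s + T → y s k = y' s k)
    (huk : ∀ s, s < t → t < s + T → u s k = u' s k) : SameInfo T k t y u y' u' :=
  ⟨hy, hu, fun s hs => (le_or_gt (s + T) t).elim (hy s k) (hyk s hs),
    fun s hs => (le_or_gt (s + T) t).elim (hu s k) (huk s hs)⟩

end SameInfo

theorem SAdmissible.eq_of_sameInfo {g : SStrat Y U k} (hg : SAdmissible T k g)
    (h : SameInfo T k t y u y' u') : g t y u = g t y' u' :=
  hg t y y' u u' h.1 h.2.1 h.2.2.1 h.2.2.2

theorem Admissible.station {γ : Strat Y U} (hγ : Admissible T γ) (k : Fin K) :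
    SAdmissible T k (γ k) :=
  hγ k

end Information

section Strategies

variable {K : ℕ} {Y U : Fin K → Type} {T : ℕ} {k : Fin K}

@[simp]
theorem updStrat_same (γ : Strat Y U) (k : Fin K) (g : SStrat Y U k) : updStrat γ k g k = g := by
  simp [updStrat]

theorem updStrat_of_ne (γ : Strat Y U) (g : SStrat Y U k) {j : Fin K} (h : j ≠ k) :
    updStrat γ k g j = γ j := by
  simp [updStrat, h]

@[simp]
theorem updStrat_updStrat (γ : Strat Y U) (k : Fin K) (g g' : SStrat Y U k) :
    updStrat (updStrat γ k g) k g' = updStrat γ k g' := by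
  funext j
  by_cases h : j = k
  · subst h; simp only [updStrat_same]
  · simp only [updStrat_of_ne _ _ h]

@[simp]
theorem updStrat_eq_self (γ : Strat Y U) (k : Fin K) : updStrat γ k (γ k) = γ := by
  funext j
  by_cases h : j = k
  · subst h; rw [updStrat_same]
  · rw [updStrat_of_ne _ _ h]

theorem Admissible.updStrat {γ : Strat Y U} (hγ : Admissible T γ) {g : SStrat Y U k}
    (hg : SAdmissible T k g) : Admissible T (updStrat γ k g) := by
  intro j
  by_cases h : j = k
  · subst h; rw [updStrat_same]; exact hg
  · rw [updStrat_of_ne _ _ h]; exact hγ.station j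

theorem sAdmissible_of_admissible_updStrat {γ : Strat Y U} {g : SStrat Y U k}
    (h : Admissible T (updStrat γ k g)) : SAdmissible T k g := by
  have hk := h.station k
  rwa [updStrat_same] at hk

theorem SAdmissible.splice {g₁ g₂ : SStrat Y U k} (h₁ : SAdmissible T k g₁)
    (h₂ : SAdmissible T k g₂) (t : ℕ) : SAdmissible T k (splice g₁ g₂ t) := by
  intro τ
  unfold DelayedSharing.splice
  split_ifs
  exacts [h₁ τ, h₂ τ]

theorem splice_self (g : SStrat Y U k) (t : ℕ) : splice g g t = g :=
  funext fun _ => ite_self _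

theorem splice_splice (g₁ g₂ : SStrat Y U k) (t : ℕ) :
    splice g₁ (splice g₁ g₂ t) t = splice g₁ g₂ t := by
  funext τ
  unfold splice
  split_ifs <;> rfl

theorem updStrat_splice_of_lt (γ : Strat Y U) (g : SStrat Y U k) {t τ : ℕ} (h : τ < t)
    (j : Fin K) : updStrat γ k (splice (γ k) g t) j τ = γ j τ := by
  by_cases hj : j = k
  · subst hj; rw [updStrat_same]; exact if_pos h
  · rw [updStrat_of_ne _ _ hj]

/-- Station `k` uses `g₁`, except that from time `t` on it switches to `g₂` if its information at
time `t` is the one recorded in `(iy, iu)`. -/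
noncomputable def deviate (T : ℕ) (k : Fin K) (t : ℕ) (iy : ℕ → ∀ j, Y j) (iu : ℕ → ∀ j, U j)
    (g₁ g₂ : SStrat Y U k) : SStrat Y U k :=
  fun τ y u => if t ≤ τ ∧ SameInfo T k t y u iy iu then g₂ τ y u else g₁ τ y u

theorem SAdmissible.deviate {g₁ g₂ : SStrat Y U k} (h₁ : SAdmissible T k g₁)
    (h₂ : SAdmissible T k g₂) (t : ℕ) (iy : ℕ → ∀ j, Y j) (iu : ℕ → ∀ j, U j) :
    SAdmissible T k (deviate T k t iy iu g₁ g₂) := by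
  intro τ y y' u u' hy hu hyk huk
  have h : SameInfo T k τ y u y' u' := ⟨hy, hu, hyk, huk⟩
  have hiff : (t ≤ τ ∧ SameInfo T k t y u iy iu) ↔ t ≤ τ ∧ SameInfo T k t y' u' iy iu :=
    and_congr_right fun ht => ⟨(h.mono ht).symm.trans, (h.mono ht).trans⟩
  simp only [DelayedSharing.deviate, hiff, h₁.eq_of_sameInfo h, h₂.eq_of_sameInfo h]

/-- The actions at time `t` only use the observations up to time `t` and the actions before
time `t`. -/
def Causal (γ : Strat Y U) : Prop :=
  ∀ (j : Fin K) (t : ℕ) (y y' : ℕ → ∀ j, Y j) (u u' : ℕ → ∀ j, U j),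
    (∀ s ≤ t, y s = y' s) → (∀ s < t, u s = u' s) → γ j t y u = γ j t y' u'

theorem Admissible.causal (hT : 1 ≤ T) {γ : Strat Y U} (hγ : Admissible T γ) : Causal γ :=
  fun j _ _ _ _ _ hy hu =>
    (hγ.station j).eq_of_sameInfo (SameInfo.of_agree hT j hy hu)

end Strategies

section Actions

variable {K : ℕ} {Y U : Fin K → Type} [∀ k, Nonempty (U k)] {γ γ' : Strat Y U}

theorem actUpto_of_lt (γ : Strat Y U) (y : ℕ → ∀ j, Y j) {s t : ℕ} (h : s < t) :
    actUpto γ y t s = act γ y s := by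
  induction t with
  | zero => exact absurd h (Nat.not_lt_zero s)
  | succ t ih =>
    simp only [actUpto]
    split_ifs with hs
    · subst hs; rfl
    · exact ih (by omega)

theorem Causal.act_apply (hγ : Causal γ) (y : ℕ → ∀ j, Y j) (t : ℕ) (j : Fin K) :
    act γ y t j = γ j t y (act γ y) :=
  hγ j t y y _ _ (fun _ _ => rfl) fun _ hs => actUpto_of_lt γ y hs

theorem Causal.act_eq_act (hγ : Causal γ) (hγ' : Causal γ') {y y' : ℕ → ∀ j, Y j} {t : ℕ}
    (h : ∀ s < t, ∀ j, γ j s y (act γ' y') = γ' j s y' (act γ' y')) :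
    ∀ s < t, act γ y s = act γ' y' s := by
  intro s
  induction s using Nat.strong_induction_on with
  | _ s ih =>
    intro hs
    funext j
    rw [hγ.act_apply, hγ'.act_apply, ← h s hs j]
    exact hγ j s y y _ _ (fun _ _ => rfl) fun r hr => ih r hr (hr.trans hs)

theorem Causal.act_congr (hγ : Causal γ) {y y' : ℕ → ∀ j, Y j} {t : ℕ}
    (h : ∀ s ≤ t, y s = y' s) : act γ y t = act γ y' t :=
  hγ.act_eq_act hγ (t := t + 1)
    (fun s hs j => hγ j s y y' _ _ (fun r hr => h r (by omega)) fun _ _ => rfl) t t.lt_succ_self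

theorem Causal.act_congr_strat (hγ : Causal γ) (hγ' : Causal γ') {t : ℕ}
    (h : ∀ s < t, ∀ j, γ j s = γ' j s) (y : ℕ → ∀ j, Y j) : ∀ s < t, act γ y s = act γ' y s :=
  hγ.act_eq_act hγ' fun s hs j => by rw [h s hs j]

end Actions

section Trajectories

variable {X : Type} {K n : ℕ} {Y U : Fin K → Type}

/-- The observation path of a trajectory, frozen after the horizon. -/
def obsPath (ω : Traj n X Y) : ℕ → ∀ j, Y j := fun s => ω.2 (idx n s)

/-- The state and the observations at time `t` along a trajectory. -/
def pointAt (ω : Traj n X Y) (t : ℕ) : X × ∀ j, Y j := (stateAt ω t, obsPath ω t)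

/-- Two trajectories have the same states and observations up to time `m`. -/
def AgreeUpTo (m : ℕ) (ω ω' : Traj n X Y) : Prop := ∀ s ≤ m, pointAt ω s = pointAt ω' s

theorem AgreeUpTo.mono {m m' : ℕ} (h : m ≤ m') {ω ω' : Traj n X Y} (hω : AgreeUpTo m' ω ω') :
    AgreeUpTo m ω ω' :=
  fun s hs => hω s (hs.trans h)

theorem AgreeUpTo.obsPath_eq {m s : ℕ} {ω ω' : Traj n X Y} (h : AgreeUpTo m ω ω') (hs : s ≤ m) :
    obsPath ω s = obsPath ω' s :=
  congrArg Prod.snd (h s hs)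

theorem AgreeUpTo.stateAt_eq {m s : ℕ} {ω ω' : Traj n X Y} (h : AgreeUpTo m ω ω') (hs : s ≤ m) :
    stateAt ω s = stateAt ω' s :=
  congrArg Prod.fst (h s hs)

/-- The random variable `F` is determined by the trajectory up to time `m`. -/
def AdaptedAt {β : Type*} (m : ℕ) (F : Traj n X Y → β) : Prop :=
  ∀ ω ω', AgreeUpTo m ω ω' → F ω = F ω'

theorem AdaptedAt.mono {β : Type*} {F : Traj n X Y → β} {m m' : ℕ} (h : m ≤ m')
    (hF : AdaptedAt m F) : AdaptedAt m' F :=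
  fun ω ω' hω => hF ω ω' (hω.mono h)

/-- Replace the state and the observations of a trajectory at index `i`. -/
noncomputable def resample (ω : Traj n X Y) (i : Fin (n + 1)) (z : X × ∀ j, Y j) : Traj n X Y :=
  (Function.update ω.1 i z.1, Function.update ω.2 i z.2)

theorem idx_ne_idx {s t : ℕ} (hs : s ≤ n) (ht : t ≤ n) (hst : s ≠ t) : idx n s ≠ idx n t := by
  intro h
  have := congrArg Fin.val h
  simp only [idx] at this
  omega

theorem agreeUpTo_resample {m : ℕ} (hm : m < n) (ω : Traj n X Y) (z : X × ∀ j, Y j) :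
    AgreeUpTo m (resample ω (idx n (m + 1)) z) ω := by
  intro s hs
  have h : idx n s ≠ idx n (m + 1) := idx_ne_idx (by omega) (by omega) (by omega)
  simp only [pointAt, stateAt, obsPath, resample, Function.update_of_ne h]

@[simp]
theorem pointAt_resample (ω : Traj n X Y) (t : ℕ) (z : X × ∀ j, Y j) :
    pointAt (resample ω (idx n t) z) t = z := by
  simp only [pointAt, stateAt, obsPath, resample, Function.update_self]

theorem sum_resample {R : Type*} [CommSemiring R] [Fintype X] [∀ k, Fintype (Y k)]
    (i : Fin (n + 1)) (F : Traj n X Y → R) :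
    ∑ ω, ∑ z, F (resample ω i z) = Fintype.card (X × ∀ j, Y j) * ∑ ω, F ω := by
  have hswap : Function.Involutive fun q : Traj n X Y × (X × ∀ j, Y j) =>
      (resample q.1 i q.2, (q.1.1 i, q.1.2 i)) := by
    rintro ⟨⟨x, y⟩, z⟩
    simp only [resample, Function.update_self, Function.update_idem, Function.update_eq_self]
  calc ∑ ω, ∑ z, F (resample ω i z)
      = ∑ q : Traj n X Y × (X × ∀ j, Y j), F (resample q.1 i q.2) :=
        (Fintype.sum_prod_type fun q : Traj n X Y × (X × ∀ j, Y j) => F (resample q.1 i q.2)).symm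
    _ = ∑ q : Traj n X Y × (X × ∀ j, Y j), F q.1 :=
        Equiv.sum_comp hswap.toPerm fun q : Traj n X Y × (X × ∀ j, Y j) => F q.1
    _ = Fintype.card (X × ∀ j, Y j) * ∑ ω, F ω := by
        rw [Fintype.sum_prod_type]
        simp only [Finset.sum_const, nsmul_eq_mul, Finset.mul_sum, Finset.card_univ]

variable [∀ k, Nonempty (U k)] {γ γ' : Strat Y U} {T : ℕ} {k : Fin K} {t : ℕ}
  {iy : ℕ → ∀ j, Y j} {iu : ℕ → ∀ j, U j}

theorem AgreeUpTo.actAt_eq {m s : ℕ} {ω ω' : Traj n X Y} (h : AgreeUpTo m ω ω') (hγ : Causal γ)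
    (hs : s ≤ m) : actAt γ ω s = actAt γ ω' s :=
  hγ.act_congr fun _ hr => h.obsPath_eq (hr.trans hs)

theorem Causal.actAt_congr_strat (hγ : Causal γ) (hγ' : Causal γ')
    (h : ∀ s < t, ∀ j, γ j s = γ' j s) (ω : Traj n X Y) : ∀ s < t, actAt γ ω s = actAt γ' ω s :=
  hγ.act_congr_strat hγ' h (obsPath ω)

theorem infoEq_obsPath_actAt (T : ℕ) (γ : Strat Y U) (k : Fin K) (t : ℕ) (ω : Traj n X Y) :
    InfoEq T γ k t (obsPath ω) (actAt γ ω) ω :=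
  SameInfo.refl T k t _ _

theorem infoEq_of_agreeUpTo (hT : 1 ≤ T) (hγ : Causal γ) {ω ω' : Traj n X Y}
    (h : AgreeUpTo t ω ω') (hω : InfoEq T γ k t iy iu ω) : InfoEq T γ k t iy iu ω' :=
  SameInfo.trans (SameInfo.of_agree hT k (fun _ hs => (h.obsPath_eq hs).symm) fun _ hs =>
    (h.actAt_eq hγ hs.le).symm) hω

theorem adaptedAt_infoEq (hT : 1 ≤ T) (hγ : Causal γ) (k : Fin K) (t : ℕ) (iy : ℕ → ∀ j, Y j)
    (iu : ℕ → ∀ j, U j) : AdaptedAt t (InfoEq (n := n) (X := X) T γ k t iy iu) :=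
  fun _ _ h => propext ⟨infoEq_of_agreeUpTo hT hγ h,
    infoEq_of_agreeUpTo hT hγ fun s hs => (h s hs).symm⟩

theorem infoEq_congr {iy' : ℕ → ∀ j, Y j} {iu' : ℕ → ∀ j, U j}
    (h : SameInfo T k t iy iu iy' iu') :
    InfoEq (n := n) (X := X) T γ k t iy iu = InfoEq T γ k t iy' iu' :=
  funext fun _ => propext ⟨fun hω => SameInfo.trans hω h, fun hω => SameInfo.trans hω h.symm⟩

theorem infoEq_congr_strat (hT : 1 ≤ T) (hγ : Causal γ) (hγ' : Causal γ')
    (h : ∀ s < t, ∀ j, γ j s = γ' j s) :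
    InfoEq (n := n) (X := X) T γ k t iy iu = InfoEq T γ' k t iy iu := by
  funext ω
  have hact := hγ.actAt_congr_strat hγ' h ω
  exact propext
    ⟨SameInfo.trans (SameInfo.of_agree hT k (fun _ _ => rfl) fun s hs => (hact s hs).symm),
      SameInfo.trans (SameInfo.of_agree hT k (fun _ _ => rfl) hact)⟩

theorem Causal.actAt_eq_of_infoEq (hγ : Causal γ) (hk : SAdmissible T k (γ k)) {ω : Traj n X Y}
    (hω : InfoEq T γ k t iy iu ω) : actAt γ ω t k = γ k t iy iu :=
  (hγ.act_apply _ t k).trans (hk.eq_of_sameInfo hω)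

/-- The partition of the trajectories by the realizations of `I_t^k`. -/
def infoSetoid (n : ℕ) (X : Type) (T : ℕ) (γ : Strat Y U) (k : Fin K) (t : ℕ) :
    Setoid (Traj n X Y) where
  r ω ω' := InfoEq T γ k t (obsPath ω') (actAt γ ω') ω
  iseqv := ⟨infoEq_obsPath_actAt T γ k t, SameInfo.symm, SameInfo.trans⟩

section Deviation

variable (hT : 1 ≤ T) (hγ : Admissible T γ) {g : SStrat Y U k} (hg : SAdmissible T k g)
include hT hγ hg

theorem actAt_deviate_of_infoEq {ω : Traj n X Y} (hω : InfoEq T γ k t iy iu ω) (s : ℕ) :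
    actAt (updStrat γ k (deviate T k t iy iu (γ k) g)) ω s =
      actAt (updStrat γ k (splice (γ k) g t)) ω s := by
  have hdev := (hγ.updStrat ((hγ.station k).deviate hg t iy iu)).causal hT
  have hspl := (hγ.updStrat ((hγ.station k).splice hg t)).causal hT
  rw [infoEq_congr_strat hT (hγ.causal hT) hspl
    fun s hs j => (updStrat_splice_of_lt γ g hs j).symm] at hω
  refine hdev.act_eq_act hspl (t := s + 1) (fun r _ j => ?_) s s.lt_succ_self
  by_cases hj : j = k
  · subst hj
    rw [updStrat_same, updStrat_same]
    by_cases hr : r < t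
    · rw [deviate, if_neg fun h => absurd h.1 (not_le.2 hr), splice, if_pos hr]
    · rw [deviate, splice, if_neg hr]
      exact if_pos ⟨not_lt.1 hr, hω⟩
  · rw [updStrat_of_ne _ _ hj, updStrat_of_ne _ _ hj]

theorem actAt_deviate_of_not_infoEq {ω : Traj n X Y} (hω : ¬ InfoEq T γ k t iy iu ω) (s : ℕ) :
    actAt (updStrat γ k (deviate T k t iy iu (γ k) g)) ω s = actAt γ ω s := by
  have hdev := (hγ.updStrat ((hγ.station k).deviate hg t iy iu)).causal hT
  refine hdev.act_eq_act (hγ.causal hT) (t := s + 1) (fun r _ j => ?_) s s.lt_succ_self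
  by_cases hj : j = k
  · subst hj
    rw [updStrat_same]
    exact if_neg fun h => hω h.2
  · rw [updStrat_of_ne _ _ hj]

theorem actAt_updStrat_splice_self (ω : Traj n X Y) (t : ℕ) :
    actAt (updStrat γ k (splice (γ k) g t)) ω t =
      Function.update (actAt γ ω t) k (g t (obsPath ω) (actAt γ ω)) := by
  have hγc := hγ.causal hT
  have hγ' := (hγ.updStrat ((hγ.station k).splice hg t)).causal hT
  have hact := hγ'.actAt_congr_strat hγc (fun s hs j => updStrat_splice_of_lt γ g hs j) ω
  funext j
  refine (hγ'.act_apply (obsPath ω) t j).trans ?_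
  by_cases hj : j = k
  · subst hj
    rw [updStrat_same, splice, if_neg (lt_irrefl t), Function.update_self]
    exact hg.eq_of_sameInfo (SameInfo.of_agree hT j (fun _ _ => rfl) hact)
  · rw [updStrat_of_ne _ _ hj, Function.update_of_ne hj]
    exact (hγc j t _ _ _ _ (fun _ _ => rfl) hact).trans (hγc.act_apply (obsPath ω) t j).symm

end Deviation

end Trajectories

section Law

variable {X : Type} {K n : ℕ} {Y U : Fin K → Type} {M : Kernels X Y U}

/-- The joint law of the state and the observations at time `t + 1`, given the state `x` and the
actions `u` at time `t`. -/
noncomputable def stepKernel (M : Kernels X Y U) (t : ℕ) (x : X) (u : ∀ j, U j)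
    (z : X × ∀ j, Y j) : ℝ :=
  M.trans t x u z.1 * ∏ k, M.obs t k z.1 u (z.2 k)

section Kernel

variable [Fintype X] [∀ k, Fintype (Y k)]

theorem Kernels.IsPMF.sum_stepKernel (hM : M.IsPMF) (t : ℕ) (x : X) (u : ∀ j, U j) :
    ∑ z, stepKernel M t x u z = 1 := by
  obtain ⟨-, -, -, htrans, hobs⟩ := hM
  simp only [Fintype.sum_prod_type, stepKernel, ← Finset.mul_sum, ← Fintype.prod_sum,
    (hobs _ _ _ _).2, Finset.prod_const_one, mul_one, (htrans t x u).2]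

theorem Kernels.IsPMF.sum_stepKernel_mul (hM : M.IsPMF) (t : ℕ) (x : X) (u : ∀ j, U j) (k : Fin K)
    (φ : Y k → ℝ) :
    ∑ z, stepKernel M t x u z * φ (z.2 k) =
      ∑ y', ∑ x', φ y' * M.obs t k x' u y' * M.trans t x u x' := by
  obtain ⟨-, -, -, -, hobs⟩ := hM
  rw [Finset.sum_comm, Fintype.sum_prod_type]
  refine Fintype.sum_congr _ _ fun x' => ?_
  have hmarginal := sum_prod_mul_apply (fun j => M.obs t j x' u) k
    (fun j _ => (hobs t j x' u).2) φ
  simp only [stepKernel, mul_assoc, ← Finset.mul_sum, hmarginal]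
  rw [Finset.mul_sum]
  exact Fintype.sum_congr _ _ fun y' => by ring

theorem Kernels.IsPMF.nonempty_point (hM : M.IsPMF) : Nonempty (X × ∀ j, Y j) := by
  obtain ⟨-, hprior, hobs0, -, -⟩ := hM
  have hX : Nonempty X := by
    by_contra h
    rw [not_nonempty_iff] at h
    simp at hprior
  have hY : ∀ j, Nonempty (Y j) := by
    intro j
    by_contra h
    rw [not_nonempty_iff] at h
    simpa using (hobs0 j (Classical.arbitrary X)).2
  infer_instance

theorem Kernels.IsPMF.card_pow_ne_zero (hM : M.IsPMF) (d : ℕ) :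
    (Fintype.card (X × ∀ j, Y j) : ℝ) ^ d ≠ 0 :=
  have := hM.nonempty_point
  pow_ne_zero _ (Nat.cast_ne_zero.2 Fintype.card_ne_zero)

end Kernel

variable [∀ k, Nonempty (U k)] {γ γ' : Strat Y U}

/-- The probability that a trajectory is followed up to time `m`.  Its sum over all trajectories
counts each initial segment once for each of its `card (X × ∀ j, Y j) ^ (n - m)` continuations. -/
noncomputable def partialProb (M : Kernels X Y U) (γ : Strat Y U) (m : ℕ) (ω : Traj n X Y) : ℝ :=
  M.prior (stateAt ω 0) * (∏ k, M.obs0 k (stateAt ω 0) (obsAt ω 0 k)) *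
    ∏ t ∈ Finset.range m, stepKernel M t (stateAt ω t) (actAt γ ω t) (pointAt ω (t + 1))

theorem partialProb_succ (γ : Strat Y U) (m : ℕ) (ω : Traj n X Y) :
    partialProb M γ (m + 1) ω =
      partialProb M γ m ω * stepKernel M m (stateAt ω m) (actAt γ ω m) (pointAt ω (m + 1)) := by
  rw [partialProb, Finset.prod_range_succ, ← mul_assoc]
  rfl

theorem partialProb_congr {m : ℕ} {ω : Traj n X Y}
    (h : ∀ s < m, actAt γ ω s = actAt γ' ω s) : partialProb M γ m ω = partialProb M γ' m ω := by
  refine congrArg _ (Finset.prod_congr rfl fun s hs => ?_)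
  rw [h s (Finset.mem_range.1 hs)]

theorem prob_congr {ω : Traj n X Y} (h : ∀ s < n, actAt γ ω s = actAt γ' ω s) :
    prob n M γ ω = prob n M γ' ω :=
  partialProb_congr h

theorem Causal.adaptedAt_partialProb (hγ : Causal γ) (m : ℕ) :
    AdaptedAt m (partialProb (n := n) M γ m) := by
  intro ω ω' h
  have hobs : ∀ k, obsAt ω 0 k = obsAt ω' 0 k := congrFun (h.obsPath_eq m.zero_le)
  simp only [partialProb, h.stateAt_eq m.zero_le, hobs]
  refine congrArg _ (Finset.prod_congr rfl fun s hs => ?_)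
  have hs' := Finset.mem_range.1 hs
  rw [h.stateAt_eq hs'.le, h.actAt_eq hγ hs'.le, h (s + 1) hs']

variable [Fintype X] [∀ k, Fintype (Y k)]

theorem Kernels.IsPMF.prob_nonneg (hM : M.IsPMF) (γ : Strat Y U) (ω : Traj n X Y) :
    0 ≤ prob n M γ ω := by
  obtain ⟨hprior, -, hobs0, htrans, hobs⟩ := hM
  exact mul_nonneg (mul_nonneg (hprior _) (Finset.prod_nonneg fun k _ => (hobs0 k _).1 _))
    (Finset.prod_nonneg fun t _ => mul_nonneg ((htrans _ _ _).1 _)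
      (Finset.prod_nonneg fun k _ => (hobs _ k _ _).1 _))

theorem sum_partialProb_succ (hγ : Causal γ) {m : ℕ} (hm : m < n)
    {ψ : Traj n X Y → (X × ∀ j, Y j) → ℝ} (hψ : AdaptedAt m ψ) :
    Fintype.card (X × ∀ j, Y j) *
        ∑ ω, partialProb M γ (m + 1) ω * ψ ω (pointAt ω (m + 1)) =
      ∑ ω, partialProb M γ m ω * ∑ z, stepKernel M m (stateAt ω m) (actAt γ ω m) z * ψ ω z := by
  rw [← sum_resample (idx n (m + 1))]
  refine Fintype.sum_congr _ _ fun ω => ?_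
  rw [Finset.mul_sum]
  refine Fintype.sum_congr _ _ fun z => ?_
  have hz := agreeUpTo_resample hm ω z
  rw [partialProb_succ, hγ.adaptedAt_partialProb m _ _ hz, hψ _ _ hz,
    hz.actAt_eq hγ le_rfl, hz.stateAt_eq le_rfl, pointAt_resample, mul_assoc]

theorem sum_partialProb_add (hM : M.IsPMF) (hγ : Causal γ) {m : ℕ} {F : Traj n X Y → ℝ}
    (hF : AdaptedAt m F) {d : ℕ} (hd : m + d ≤ n) :
    (Fintype.card (X × ∀ j, Y j) : ℝ) ^ d * ∑ ω, partialProb M γ (m + d) ω * F ω =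
      ∑ ω, partialProb M γ m ω * F ω := by
  induction d with
  | zero => rw [pow_zero, one_mul, add_zero]
  | succ d ih =>
    have hψ : AdaptedAt (m + d) fun ω (_ : X × ∀ j, Y j) => F ω := fun ω ω' h =>
      funext fun _ => hF.mono (Nat.le_add_right m d) ω ω' h
    rw [pow_succ, mul_assoc, ← add_assoc, sum_partialProb_succ hγ (by omega) hψ, ← ih (by omega)]
    simp only [← Finset.sum_mul, hM.sum_stepKernel, one_mul]

theorem sum_prob_eq_sum_partialProb (hM : M.IsPMF) (hγ : Causal γ) {m : ℕ} (hm : m ≤ n)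
    {F : Traj n X Y → ℝ} (hF : AdaptedAt m F) :
    (Fintype.card (X × ∀ j, Y j) : ℝ) ^ (n - m) * ∑ ω, prob n M γ ω * F ω =
      ∑ ω, partialProb M γ m ω * F ω := by
  rw [← sum_partialProb_add hM hγ hF (d := n - m) (by omega), Nat.add_sub_cancel' hm]
  rfl

theorem sum_prob_congr_strat (hM : M.IsPMF) (hγ : Causal γ) (hγ' : Causal γ') {m : ℕ}
    (hm : m ≤ n) (h : ∀ s < m, ∀ j, γ j s = γ' j s) {F : Traj n X Y → ℝ} (hF : AdaptedAt m F) :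
    ∑ ω, prob n M γ ω * F ω = ∑ ω, prob n M γ' ω * F ω := by
  refine mul_left_cancel₀ (hM.card_pow_ne_zero (n - m)) ?_
  rw [sum_prob_eq_sum_partialProb hM hγ hm hF, sum_prob_eq_sum_partialProb hM hγ' hm hF]
  exact Fintype.sum_congr _ _ fun ω =>
    congrArg (· * F ω) (partialProb_congr (hγ.actAt_congr_strat hγ' h ω))

theorem sum_prob_mul_pointAt_succ (hM : M.IsPMF) (hγ : Causal γ) {m : ℕ} (hm : m < n)
    {ψ : Traj n X Y → (X × ∀ j, Y j) → ℝ} (hψ : AdaptedAt m ψ) :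
    ∑ ω, prob n M γ ω * ψ ω (pointAt ω (m + 1)) =
      ∑ ω, prob n M γ ω * ∑ z, stepKernel M m (stateAt ω m) (actAt γ ω m) z * ψ ω z := by
  have hleft : AdaptedAt (m + 1) fun ω => ψ ω (pointAt ω (m + 1)) := fun ω ω' h => by
    simp only [hψ.mono m.le_succ ω ω' h, h (m + 1) le_rfl]
  have hright : AdaptedAt m fun ω =>
      ∑ z, stepKernel M m (stateAt ω m) (actAt γ ω m) z * ψ ω z := fun ω ω' h => by
    simp only [hψ ω ω' h, h.actAt_eq hγ le_rfl, h.stateAt_eq le_rfl]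
  refine mul_left_cancel₀ (hM.card_pow_ne_zero (n - m)) ?_
  rw [sum_prob_eq_sum_partialProb hM hγ hm.le hright, ← sum_partialProb_succ hγ hm hψ,
    ← sum_prob_eq_sum_partialProb hM hγ hm hleft, ← mul_assoc, ← pow_succ',
    show n - (m + 1) + 1 = n - m by omega]

end Law

section Expectation

variable {X : Type} {K n : ℕ} {Y U : Fin K → Type} [∀ k, Nonempty (U k)] [Fintype X]
  [∀ k, Fintype (Y k)] {M : Kernels X Y U} {γ γ' : Strat Y U} {B : Traj n X Y → Prop}
  {f f' : Traj n X Y → ℝ}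

/-- The expectation `𝔼^γ[f 1_B]`. -/
noncomputable def expectOn (n : ℕ) (M : Kernels X Y U) (γ : Strat Y U) (B : Traj n X Y → Prop)
    (f : Traj n X Y → ℝ) : ℝ :=
  ∑ ω, if B ω then prob n M γ ω * f ω else 0

/-- The elementary conditional expectation `𝔼^γ[f | B]`, with value `0` if `B` is null. -/
noncomputable def condExpect (n : ℕ) (M : Kernels X Y U) (γ : Strat Y U) (B : Traj n X Y → Prop)
    (f : Traj n X Y → ℝ) : ℝ :=
  expectOn n M γ B f / Pr n M γ B

theorem expectOn_eq_sum (γ : Strat Y U) (B : Traj n X Y → Prop) (f : Traj n X Y → ℝ) :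
    expectOn n M γ B f = ∑ ω, prob n M γ ω * if B ω then f ω else 0 := by
  simp only [expectOn, mul_ite, mul_zero]

theorem expectOn_true (γ : Strat Y U) (f : Traj n X Y → ℝ) :
    expectOn n M γ (fun _ => True) f = ∑ ω, prob n M γ ω * f ω := by
  simp only [expectOn, if_true]

theorem Pr_eq_expectOn (γ : Strat Y U) (B : Traj n X Y → Prop) :
    Pr n M γ B = expectOn n M γ B fun _ => 1 := by
  simp only [expectOn, Pr, mul_one]

theorem expectOn_congr (h : ∀ ω, B ω → f ω = f' ω) : expectOn n M γ B f = expectOn n M γ B f' :=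
  Fintype.sum_congr _ _ fun ω => by
    split_ifs with hω
    exacts [by rw [h ω hω], rfl]

theorem condExpect_congr (h : ∀ ω, B ω → f ω = f' ω) :
    condExpect n M γ B f = condExpect n M γ B f' := by
  rw [condExpect, expectOn_congr h, condExpect]

theorem expectOn_add (γ : Strat Y U) (B : Traj n X Y → Prop) (f f' : Traj n X Y → ℝ) :
    (expectOn n M γ B fun ω => f ω + f' ω) = expectOn n M γ B f + expectOn n M γ B f' := by
  simp only [expectOn, ← Finset.sum_add_distrib, mul_add, ite_add_ite, add_zero]

theorem condExpect_add (γ : Strat Y U) (B : Traj n X Y → Prop) (f f' : Traj n X Y → ℝ) :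
    (condExpect n M γ B fun ω => f ω + f' ω) = condExpect n M γ B f + condExpect n M γ B f' := by
  rw [condExpect, expectOn_add, add_div]
  rfl

theorem condExpect_sum {ι : Type*} (s : Finset ι) (γ : Strat Y U) (B : Traj n X Y → Prop)
    (f : ι → Traj n X Y → ℝ) :
    (condExpect n M γ B fun ω => ∑ i ∈ s, f i ω) = ∑ i ∈ s, condExpect n M γ B (f i) := by
  simp only [condExpect, expectOn_eq_sum, ← Finset.sum_div]
  rw [Finset.sum_comm]
  simp only [← Finset.mul_sum, Finset.sum_ite_irrel, Finset.sum_const_zero]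

theorem expectOn_add_expectOn_not (γ : Strat Y U) (B : Traj n X Y → Prop) (f : Traj n X Y → ℝ) :
    (expectOn n M γ B f + expectOn n M γ (fun ω => ¬ B ω) f) =
      expectOn n M γ (fun _ => True) f := by
  rw [expectOn_true]
  simp only [expectOn, ← Finset.sum_add_distrib]
  refine Fintype.sum_congr _ _ fun ω => ?_
  by_cases h : B ω <;> simp [h]

theorem expectOn_congr_actAt (h : ∀ ω, B ω → ∀ s < n, actAt γ ω s = actAt γ' ω s)
    (hf : ∀ ω, B ω → f ω = f' ω) : expectOn n M γ B f = expectOn n M γ' B f' :=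
  Fintype.sum_congr _ _ fun ω => by
    split_ifs with hω
    · rw [hf ω hω, prob_congr (h ω hω)]
    · rfl

theorem expectOn_congr_strat (hM : M.IsPMF) (hγ : Causal γ) (hγ' : Causal γ') {m : ℕ}
    (hm : m ≤ n) (h : ∀ s < m, ∀ j, γ j s = γ' j s) (hB : AdaptedAt m B) (hf : AdaptedAt m f) :
    expectOn n M γ B f = expectOn n M γ' B f := by
  rw [expectOn_eq_sum, expectOn_eq_sum]
  exact sum_prob_congr_strat hM hγ hγ' hm h fun ω ω' hω => by rw [hB ω ω' hω, hf ω ω' hω]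

theorem Pr_congr_strat (hM : M.IsPMF) (hγ : Causal γ) (hγ' : Causal γ') {m : ℕ}
    (hm : m ≤ n) (h : ∀ s < m, ∀ j, γ j s = γ' j s) (hB : AdaptedAt m B) :
    Pr n M γ B = Pr n M γ' B := by
  rw [Pr_eq_expectOn, Pr_eq_expectOn]
  exact expectOn_congr_strat hM hγ hγ' hm h hB fun _ _ _ => rfl

theorem expectOn_pointAt_succ (hM : M.IsPMF) (hγ : Causal γ) {m : ℕ} (hm : m < n)
    (hB : AdaptedAt m B) {ψ : Traj n X Y → (X × ∀ j, Y j) → ℝ} (hψ : AdaptedAt m ψ) :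
    (expectOn n M γ B fun ω => ψ ω (pointAt ω (m + 1))) =
      expectOn n M γ B fun ω => ∑ z, stepKernel M m (stateAt ω m) (actAt γ ω m) z * ψ ω z := by
  have hBψ : AdaptedAt m fun ω z => if B ω then ψ ω z else 0 := fun ω ω' h => by
    simp only [hB ω ω' h, hψ ω ω' h]
  rw [expectOn_eq_sum, expectOn_eq_sum, sum_prob_mul_pointAt_succ hM hγ hm hBψ]
  refine Fintype.sum_congr _ _ fun ω => ?_
  split_ifs <;> simp only [mul_zero, Finset.sum_const_zero]

theorem Kernels.IsPMF.Pr_nonneg (hM : M.IsPMF) (γ : Strat Y U) (B : Traj n X Y → Prop) :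
    0 ≤ Pr n M γ B :=
  Finset.sum_nonneg fun ω _ => by
    split_ifs
    exacts [hM.prob_nonneg γ ω, le_rfl]

theorem expectOn_mono (hM : M.IsPMF) (γ : Strat Y U) (B : Traj n X Y → Prop)
    (h : ∀ ω, f ω ≤ f' ω) : expectOn n M γ B f ≤ expectOn n M γ B f' :=
  Finset.sum_le_sum fun ω _ => by
    split_ifs
    exacts [mul_le_mul_of_nonneg_left (h ω) (hM.prob_nonneg γ ω), le_rfl]

theorem expectOn_condExpect_infoEq (hM : M.IsPMF) {T : ℕ} {k : Fin K} {t : ℕ}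
    (hB : ∀ ω ω', InfoEq T γ k t (obsPath ω') (actAt γ ω') ω → (B ω ↔ B ω'))
    (f : Traj n X Y → ℝ) :
    (expectOn n M γ B fun ω =>
        condExpect n M γ (InfoEq T γ k t (obsPath ω) (actAt γ ω)) f) = expectOn n M γ B f :=
  sum_mul_classAverage (hM.prob_nonneg γ) (infoSetoid n X T γ k t) f hB

end Expectation

section Posterior

variable {X : Type} {K n : ℕ} {Y U : Fin K → Type} [∀ k, Nonempty (Y k)] [∀ k, Nonempty (U k)]
  {M : Kernels X Y U} {γ : Strat Y U} {T : ℕ} {k : Fin K} {t : ℕ}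
  {iy : ℕ → ∀ j, Y j} {iu : ℕ → ∀ j, U j} {ω : Traj n X Y}

/-- The realization of the private data `Λ_t^{-k}` along a trajectory, as an element of
`privSet`. -/
noncomputable def othersWindow (T : ℕ) (γ : Strat Y U) (k : Fin K) (t : ℕ) (ω : Traj n X Y) :
    (Fin (n + 1) → ∀ j, Y j) × (Fin (n + 1) → ∀ j, U j) :=
  (fun s j => if j ≠ k ∧ s.1 ≤ t ∧ t < s.1 + T then obsPath ω s.1 j else Classical.arbitrary (Y j),
   fun s j => if j ≠ k ∧ s.1 < t ∧ t < s.1 + T then actAt γ ω s.1 j else Classical.arbitrary (U j))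

theorem coe_idx {s : ℕ} (h : s ≤ n) : (idx n s : ℕ) = s :=
  Nat.min_eq_left h

theorem idx_coe (s : Fin (n + 1)) : idx n s = s :=
  Fin.ext (coe_idx (Nat.lt_succ_iff.1 s.2))

theorem Causal.adaptedAt_othersWindow (hγ : Causal γ) (T : ℕ) (k : Fin K) (t : ℕ) :
    AdaptedAt t (othersWindow (n := n) (X := X) T γ k t) := by
  intro ω ω' h
  refine Prod.ext (funext₂ fun s j => ?_) (funext₂ fun s j => ?_)
  · refine ite_congr rfl (fun hs => ?_) fun _ => rfl
    rw [h.obsPath_eq hs.2.1]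
  · refine ite_congr rfl (fun hs => ?_) fun _ => rfl
    rw [h.actAt_eq hγ hs.2.1.le]

theorem mixObs_othersWindow (ht : t ≤ n) (hω : InfoEq T γ k t iy iu ω) {s : ℕ} (hs : s ≤ t) :
    mixObs T t k iy (othersWindow T γ k t ω).1 s = obsPath ω s := by
  funext j
  simp only [mixObs, othersWindow, coe_idx (hs.trans ht)]
  by_cases hj : j = k
  · subst hj; rw [if_pos (.inl rfl), ← hω.2.2.1 s hs]; rfl
  by_cases hsT : s + T ≤ t
  · rw [if_pos (.inr hsT), ← hω.1 s j hsT]; rfl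
  · rw [if_neg (by tauto), if_pos ⟨hj, hs, not_le.1 hsT⟩]

theorem mixAct_othersWindow (ht : t ≤ n) (hω : InfoEq T γ k t iy iu ω) {s : ℕ} (hs : s < t) :
    mixAct T t k iu (othersWindow T γ k t ω).2 s = actAt γ ω s := by
  funext j
  simp only [mixAct, othersWindow, coe_idx (hs.le.trans ht)]
  by_cases hj : j = k
  · subst hj; rw [if_pos (.inl rfl), ← hω.2.2.2 s hs]
  by_cases hsT : s + T ≤ t
  · rw [if_pos (.inr hsT), ← hω.2.1 s j hsT]
  · rw [if_neg (by tauto), if_pos ⟨hj, hs, not_le.1 hsT⟩]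

theorem prof_othersWindow (hγ : Causal γ) (ht : t ≤ n) (hω : InfoEq T γ k t iy iu ω) (u : U k) :
    prof T t γ k iy iu (othersWindow T γ k t ω) u = Function.update (actAt γ ω t) k u := by
  refine congrArg (Function.update · k u) (funext fun j => ?_)
  rw [hγ j t _ (obsPath ω) _ (actAt γ ω) (fun s hs => mixObs_othersWindow ht hω hs)
    fun s hs => mixAct_othersWindow ht hω hs]
  exact (hγ.act_apply _ t j).symm

theorem prof_othersWindow_own (hT : 1 ≤ T) (hγ : Admissible T γ) (ht : t ≤ n)
    (hω : InfoEq T γ k t iy iu ω) :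
    prof T t γ k iy iu (othersWindow T γ k t ω) (γ k t iy iu) = actAt γ ω t := by
  rw [prof_othersWindow (hγ.causal hT) ht hω,
    ← (hγ.causal hT).actAt_eq_of_infoEq (hγ.station k) hω, Function.update_eq_self]

theorem sameInfo_newObs_newAct (hT : 1 ≤ T) (hγ : Admissible T γ) (ht : t < n)
    (hω : InfoEq T γ k t iy iu ω) :
    SameInfo T k (t + 1)
      (newObs T t k iy (othersWindow T γ k t ω) (obsPath ω (t + 1) k))
      (newAct T t γ k iy iu (othersWindow T γ k t ω) (γ k t iy iu))
      (obsPath ω) (actAt γ ω) := by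
  have hobs : ∀ s ≤ t, newObs T t k iy (othersWindow T γ k t ω) (obsPath ω (t + 1) k) s =
      obsPath ω s := fun s hs => by
    rw [newObs, if_neg (by omega), mixObs_othersWindow ht.le hω hs]
  have hact : ∀ s ≤ t, newAct T t γ k iy iu (othersWindow T γ k t ω) (γ k t iy iu) s =
      actAt γ ω s := fun s hs => by
    rcases hs.eq_or_lt with rfl | hs
    · rw [newAct, if_pos rfl, prof_othersWindow_own hT hγ ht.le hω]
    · rw [newAct, if_neg hs.ne, mixAct_othersWindow ht.le hω hs]
  refine ⟨fun s j hs => congrFun (hobs s (by omega)) j,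
    fun s j hs => congrFun (hact s (by omega)) j, fun s hs => ?_,
    fun s hs => congrFun (hact s (by omega)) k⟩
  rcases hs.eq_or_lt with rfl | hs
  · rw [newObs, if_pos rfl, Function.update_self]
  · exact congrFun (hobs s (by omega)) k

variable [∀ k, Fintype (Y k)] [∀ k, Fintype (U k)] [∀ k, DecidableEq (Y k)]
  [∀ k, DecidableEq (U k)]

theorem othersWindow_mem_privSet (T : ℕ) (γ : Strat Y U) (k : Fin K) (t : ℕ) (ω : Traj n X Y) :
    othersWindow T γ k t ω ∈ privSet n T k t :=
  Finset.mem_filter.2 ⟨Finset.mem_univ _, fun _ _ hs => if_neg hs, fun _ _ hs => if_neg hs⟩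

theorem privOthersEq_iff_eq_othersWindow (ht : t ≤ n)
    {p : (Fin (n + 1) → ∀ j, Y j) × (Fin (n + 1) → ∀ j, U j)} (hp : p ∈ privSet n T k t) :
    PrivOthersEq T γ k t (pWinY p) (pWinU p) ω ↔ p = othersWindow T γ k t ω := by
  obtain ⟨hpY, hpU⟩ := (Finset.mem_filter.1 hp).2
  constructor
  · rintro ⟨hobs, hact⟩
    refine Prod.ext (funext₂ fun s j => ?_) (funext₂ fun s j => ?_)
    · by_cases hs : j ≠ k ∧ s.1 ≤ t ∧ t < s.1 + T
      · have h := hobs s.1 j hs.1 hs.2.1 hs.2.2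
        rw [pWinY, idx_coe] at h
        exact h.symm.trans (if_pos hs).symm
      · exact (hpY s j hs).trans (if_neg hs).symm
    · by_cases hs : j ≠ k ∧ s.1 < t ∧ t < s.1 + T
      · have h := hact s.1 j hs.1 hs.2.1 hs.2.2
        rw [pWinU, idx_coe] at h
        exact h.symm.trans (if_pos hs).symm
      · exact (hpU s j hs).trans (if_neg hs).symm
  · rintro rfl
    refine ⟨fun s j hj hs hsT => ?_, fun s j hj hs hsT => ?_⟩
    · simp only [pWinY, othersWindow, coe_idx (hs.trans ht)]
      rw [if_pos ⟨hj, hs, hsT⟩]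
      rfl
    · simp only [pWinU, othersWindow, coe_idx (hs.le.trans ht)]
      rw [if_pos ⟨hj, hs, hsT⟩]

variable [Fintype X]

theorem sum_mul_Xi (ht : t ≤ n)
    (Φ : X → (Fin (n + 1) → ∀ j, Y j) × (Fin (n + 1) → ∀ j, U j) → ℝ) :
    ∑ x, ∑ p ∈ privSet n T k t, Φ x p * Xi n T M γ k t iy iu x (pWinY p) (pWinU p) =
      condExpect n M γ (InfoEq T γ k t iy iu)
        fun ω => Φ (stateAt ω t) (othersWindow T γ k t ω) := by
  have hXi : ∀ x, ∀ p ∈ privSet n T k t,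
      Φ x p * Xi n T M γ k t iy iu x (pWinY p) (pWinU p) =
        condExpect n M γ (InfoEq T γ k t iy iu) fun ω =>
          if stateAt ω t = x then if othersWindow T γ k t ω = p then Φ x p else 0 else 0 := by
    intro x p hp
    rw [Xi, condPr, ← mul_div_assoc, condExpect]
    congr 1
    simp only [Pr, expectOn, Finset.mul_sum, privOthersEq_iff_eq_othersWindow ht hp,
      eq_comm (a := p), ← ite_and, mul_ite, mul_zero]
    refine Fintype.sum_congr _ _ fun ω => if_congr and_comm (mul_comm _ _) rfl
  rw [Finset.sum_congr rfl fun x _ => Finset.sum_congr rfl (hXi x)]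
  simp only [← condExpect_sum]
  refine condExpect_congr fun ω _ => ?_
  simp only [Finset.sum_ite_irrel, Finset.sum_const_zero, Finset.sum_ite_eq, Finset.mem_univ,
    othersWindow_mem_privSet, if_true]

theorem dpStage_eq_condExpect (hγ : Causal γ) (ht : t ≤ n) (u : U k) :
    dpStage n T M γ k t iy iu u =
      condExpect n M γ (InfoEq T γ k t iy iu)
        fun ω => M.cost t (stateAt ω t) (Function.update (actAt γ ω t) k u) :=
  (sum_mul_Xi ht fun x p => M.cost t x (prof T t γ k iy iu p u)).trans <|
    condExpect_congr fun ω hω => by rw [prof_othersWindow hγ ht hω]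

theorem dpStage_own_eq_condExpect (hT : 1 ≤ T) (hγ : Admissible T γ) (ht : t ≤ n) :
    dpStage n T M γ k t iy iu (γ k t iy iu) =
      condExpect n M γ (InfoEq T γ k t iy iu) fun ω => M.cost t (stateAt ω t) (actAt γ ω t) := by
  rw [dpStage_eq_condExpect (hγ.causal hT) ht]
  refine condExpect_congr fun ω hω => ?_
  rw [← (hγ.causal hT).actAt_eq_of_infoEq (hγ.station k) hω, Function.update_eq_self]

theorem dpCont_eq_condExpect_sum (hM : M.IsPMF) (ht : t ≤ n)
    (V : ℕ → (ℕ → ∀ j, Y j) → (ℕ → ∀ j, U j) → ℝ) (u : U k) :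
    dpCont n T M γ k t iy iu V u =
      condExpect n M γ (InfoEq T γ k t iy iu) fun ω =>
        ∑ z, stepKernel M t (stateAt ω t) (prof T t γ k iy iu (othersWindow T γ k t ω) u) z *
          V (t + 1) (newObs T t k iy (othersWindow T γ k t ω) (z.2 k))
            (newAct T t γ k iy iu (othersWindow T γ k t ω) u) := by
  have hstep := fun x p => hM.sum_stepKernel_mul t x (prof (n := n) T t γ k iy iu p u) k
    fun y' => V (t + 1) (newObs T t k iy p y') (newAct T t γ k iy iu p u)
  rw [← sum_mul_Xi ht fun x p => ∑ z, stepKernel M t x (prof T t γ k iy iu p u) z *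
    V (t + 1) (newObs T t k iy p (z.2 k)) (newAct T t γ k iy iu p u)]
  simp only [hstep]
  simp only [Finset.sum_mul]
  rw [dpCont, Finset.sum_comm]
  refine Fintype.sum_congr _ _ fun x => ?_
  rw [Finset.sum_comm (s := privSet n T k t)]
  exact Fintype.sum_congr _ _ fun y' => Finset.sum_comm

theorem dpCont_own_eq_condExpect (hT : 1 ≤ T) (hM : M.IsPMF) (hγ : Admissible T γ) (ht : t < n)
    {V : ℕ → (ℕ → ∀ j, Y j) → (ℕ → ∀ j, U j) → ℝ}
    (hV : ∀ y u y' u', SameInfo T k (t + 1) y u y' u' → V (t + 1) y u = V (t + 1) y' u') :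
    dpCont n T M γ k t iy iu V (γ k t iy iu) =
      condExpect n M γ (InfoEq T γ k t iy iu) fun ω => V (t + 1) (obsPath ω) (actAt γ ω) := by
  have hcausal := hγ.causal hT
  set ψ : Traj n X Y → (X × ∀ j, Y j) → ℝ := fun ω z =>
    V (t + 1) (newObs T t k iy (othersWindow T γ k t ω) (z.2 k))
      (newAct T t γ k iy iu (othersWindow T γ k t ω) (γ k t iy iu)) with hψdef
  have hψ : AdaptedAt t ψ := fun ω ω' h => by
    simp only [hψdef, hcausal.adaptedAt_othersWindow T k t ω ω' h]
  calc dpCont n T M γ k t iy iu V (γ k t iy iu)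
      = condExpect n M γ (InfoEq T γ k t iy iu) fun ω =>
          ∑ z, stepKernel M t (stateAt ω t) (actAt γ ω t) z * ψ ω z := by
        rw [dpCont_eq_condExpect_sum hM ht.le]
        exact condExpect_congr fun ω hω => by rw [prof_othersWindow_own hT hγ ht.le hω]
    _ = condExpect n M γ (InfoEq T γ k t iy iu) fun ω => ψ ω (pointAt ω (t + 1)) := by
        rw [condExpect, ← expectOn_pointAt_succ hM hcausal ht
          (adaptedAt_infoEq hT hcausal k t iy iu) hψ]
        rfl
    _ = condExpect n M γ (InfoEq T γ k t iy iu) fun ω => V (t + 1) (obsPath ω) (actAt γ ω) :=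
        condExpect_congr fun ω hω => hV _ _ _ _ (sameInfo_newObs_newAct hT hγ ht hω)

theorem dpStage_congr_of_Xi_eq (hγ : Admissible T γ) {y y' : ℕ → ∀ j, Y j}
    {u u' : ℕ → ∀ j, U j}
    (hXi : ∀ x ly lu, Xi n T M γ k t y u x ly lu = Xi n T M γ k t y' u' x ly lu)
    (hy : ∀ s (j : Fin K), s + T ≤ t → y s j = y' s j)
    (hu : ∀ s (j : Fin K), s + T ≤ t → u s j = u' s j) :
    dpStage n T M γ k t y u = dpStage n T M γ k t y' u' := by
  have hprof : ∀ p a, prof (n := n) T t γ k y u p a = prof T t γ k y' u' p a := by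
    intro p a
    funext j
    by_cases hj : j = k
    · subst hj; simp only [prof, Function.update_self]
    simp only [prof, Function.update_of_ne hj]
    refine (hγ.station j).eq_of_sameInfo ⟨?_, ?_, ?_, ?_⟩
    · exact fun s i hs => ite_congr rfl (fun _ => hy s i hs) fun _ => rfl
    · exact fun s i hs => ite_congr rfl (fun _ => hu s i hs) fun _ => rfl
    · exact fun s _ => ite_congr rfl (fun h => hy s j (h.resolve_left hj)) fun _ => rfl
    · exact fun s _ => ite_congr rfl (fun h => hu s j (h.resolve_left hj)) fun _ => rfl
  funext a
  simp only [dpStage, hprof, hXi]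

end Posterior

section BestResponse

variable {X : Type} {K n : ℕ} {Y U : Fin K → Type} [∀ k, Nonempty (U k)] {M : Kernels X Y U}
  {γ γ' : Strat Y U} {T : ℕ} {k : Fin K} {t : ℕ} {iy : ℕ → ∀ j, Y j} {iu : ℕ → ∀ j, U j}

/-- The cost incurred along a trajectory at the times in `s`. -/
noncomputable def costOn (M : Kernels X Y U) (γ : Strat Y U) (s : Finset ℕ) (ω : Traj n X Y) : ℝ :=
  ∑ τ ∈ s, M.cost τ (stateAt ω τ) (actAt γ ω τ)

theorem costOn_congr {s : Finset ℕ} {ω : Traj n X Y}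
    (h : ∀ τ ∈ s, actAt γ ω τ = actAt γ' ω τ) : costOn M γ s ω = costOn M γ' s ω :=
  Finset.sum_congr rfl fun τ hτ => by rw [h τ hτ]

theorem costOn_range_succ_eq_add (ht : t ≤ n) :
    costOn (n := n) M γ (Finset.range (n + 1)) =
      fun ω => costOn M γ (Finset.range t) ω + costOn M γ (Finset.Icc t n) ω :=
  funext fun ω => by
    rw [costOn, ← Finset.sum_range_add_sum_Ico _ (by omega : t ≤ n + 1),
      Finset.Ico_add_one_right_eq_Icc]
    rfl

theorem costOn_Icc_eq_add (ht : t ≤ n) :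
    costOn (n := n) M γ (Finset.Icc t n) = fun ω =>
      M.cost t (stateAt ω t) (actAt γ ω t) + costOn M γ (Finset.Icc (t + 1) n) ω :=
  funext fun ω => by
    rw [costOn, ← Finset.insert_Icc_add_one_left_eq_Icc ht, Finset.sum_insert (by simp)]
    rfl

theorem Causal.adaptedAt_costOn (hγ : Causal γ) {s : Finset ℕ} (hs : ∀ τ ∈ s, τ ≤ t) :
    AdaptedAt t (costOn (n := n) M γ s) := fun ω ω' h =>
  Finset.sum_congr rfl fun τ hτ => by rw [h.stateAt_eq (hs τ hτ), h.actAt_eq hγ (hs τ hτ)]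

variable [Fintype X] [∀ k, Fintype (Y k)]

/-- Station `k`'s strategy in `γ` is optimal against the strategies of the other stations. -/
def IsBestResponse (n T : ℕ) (M : Kernels X Y U) (γ : Strat Y U) (k : Fin K) : Prop :=
  Admissible T γ ∧ ∀ g : SStrat Y U k, Admissible T (updStrat γ k g) →
    J n M γ ≤ J n M (updStrat γ k g)

theorem J_eq_expectOn (γ : Strat Y U) :
    J n M γ = expectOn n M γ (fun _ => True) (costOn M γ (Finset.range (n + 1))) :=
  (expectOn_true _ _).symm

theorem finite_range_J [∀ k, Finite (U k)] (n : ℕ) (M : Kernels X Y U) :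
    (Set.range (J n M)).Finite := by
  let table : Strat Y U → Traj n X Y × Fin (n + 1) → ∀ j, U j := fun γ q => actAt γ q.1 q.2
  have hJ : (J n M).FactorsThrough table := by
    intro γ γ' h
    have hact : ∀ ω : Traj n X Y, ∀ s < n + 1, actAt γ ω s = actAt γ' ω s := fun ω s hs =>
      congrFun h (ω, ⟨s, hs⟩)
    rw [J_eq_expectOn, J_eq_expectOn]
    exact expectOn_congr_actAt (fun ω _ s hs => hact ω s (hs.trans n.lt_succ_self))
      fun ω _ => costOn_congr fun s hs => hact ω s (Finset.mem_range.1 hs)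
  refine (Set.finite_range (Function.extend table (J n M) 0)).subset ?_
  rintro _ ⟨γ, rfl⟩
  exact ⟨table γ, hJ.extend_apply 0 γ⟩

theorem exists_isBestResponse [∀ k, Finite (U k)] (n : ℕ) (M : Kernels X Y U)
    (hγ : Admissible T γ) (k : Fin K) : ∃ g, IsBestResponse n T M (updStrat γ k g) k := by
  have hfin : ((fun g => J n M (updStrat γ k g)) '' {g | SAdmissible T k g}).Finite :=
    (finite_range_J n M).subset <| by rintro _ ⟨g, -, rfl⟩; exact ⟨_, rfl⟩
  obtain ⟨g, hg, hmin⟩ := hfin.exists_minimalFor' _ _ ⟨γ k, hγ.station k⟩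
  refine ⟨g, hγ.updStrat hg, fun g' hg' => ?_⟩
  rw [updStrat_updStrat] at hg' ⊢
  exact (le_total _ _).elim id (hmin (sAdmissible_of_admissible_updStrat hg'))

section ValueProcess

variable (hT : 1 ≤ T) (hbest : IsBestResponse n T M γ k)
include hT hbest

theorem IsBestResponse.expectOn_infoEq_le {g : SStrat Y U k} (hg : SAdmissible T k g) (t : ℕ)
    (iy : ℕ → ∀ j, Y j) (iu : ℕ → ∀ j, U j) :
    expectOn n M γ (InfoEq T γ k t iy iu) (costOn M γ (Finset.range (n + 1))) ≤
      expectOn n M (updStrat γ k (splice (γ k) g t)) (InfoEq T γ k t iy iu)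
        (costOn M (updStrat γ k (splice (γ k) g t)) (Finset.range (n + 1))) := by
  obtain ⟨hγ, hmin⟩ := hbest
  have hle := hmin _ (hγ.updStrat ((hγ.station k).deviate hg t iy iu))
  rw [J_eq_expectOn, J_eq_expectOn, ← expectOn_add_expectOn_not γ (InfoEq T γ k t iy iu),
    ← expectOn_add_expectOn_not (updStrat γ k (deviate T k t iy iu (γ k) g))
      (InfoEq T γ k t iy iu)] at hle
  have hon := fun ω (hω : InfoEq (n := n) (X := X) T γ k t iy iu ω) s =>
    actAt_deviate_of_infoEq hT hγ hg hω s
  have hoff := fun ω (hω : ¬ InfoEq (n := n) (X := X) T γ k t iy iu ω) s =>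
    actAt_deviate_of_not_infoEq hT hγ hg hω s
  rw [expectOn_congr_actAt (fun ω hω s _ => hon ω hω s)
      fun ω hω => costOn_congr fun s _ => hon ω hω s,
    expectOn_congr_actAt (fun ω hω s _ => hoff ω hω s)
      fun ω hω => costOn_congr fun s _ => hoff ω hω s] at hle
  exact le_of_add_le_add_right hle

theorem IsBestResponse.jcond_le (hM : M.IsPMF) (ht : t ≤ n) {g : SStrat Y U k}
    (hg : SAdmissible T k g) :
    Jcond n M γ t (InfoEq T γ k t iy iu) ≤
      Jcond n M (updStrat γ k (splice (γ k) g t)) t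
        (InfoEq T (updStrat γ k (splice (γ k) g t)) k t iy iu) := by
  have hγ := hbest.1.causal hT
  have hle := hbest.expectOn_infoEq_le hT hg t iy iu
  have hγ' := (hbest.1.updStrat ((hbest.1.station k).splice hg t)).causal hT
  have heq : ∀ s < t, ∀ j, γ j s = updStrat γ k (splice (γ k) g t) j s := fun s hs j =>
    (updStrat_splice_of_lt γ g hs j).symm
  set γ' := updStrat γ k (splice (γ k) g t)
  have hInfo := adaptedAt_infoEq (n := n) (X := X) hT hγ k t iy iu
  have hpast : expectOn n M γ (InfoEq T γ k t iy iu) (costOn M γ (Finset.range t)) =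
      expectOn n M γ' (InfoEq T γ k t iy iu) (costOn M γ' (Finset.range t)) :=
    (expectOn_congr_strat hM hγ hγ' ht heq hInfo
      (hγ.adaptedAt_costOn fun τ hτ => (Finset.mem_range.1 hτ).le)).trans <|
      expectOn_congr fun ω _ => costOn_congr fun s hs =>
        hγ.actAt_congr_strat hγ' heq ω s (Finset.mem_range.1 hs)
  simp only [costOn_range_succ_eq_add ht, expectOn_add, hpast] at hle
  rw [← infoEq_congr_strat hT hγ hγ' heq]
  change condExpect n M γ _ (costOn M γ _) ≤ condExpect n M γ' _ (costOn M γ' _)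
  rw [condExpect, condExpect, ← Pr_congr_strat hM hγ hγ' ht heq hInfo]
  exact div_le_div_of_nonneg_right (le_of_add_le_add_left hle) (hM.Pr_nonneg γ _)

theorem IsBestResponse.vval_eq_jcond (hM : M.IsPMF) (ht : t ≤ n) :
    Vval n T M γ k t iy iu = Jcond n M γ t (InfoEq T γ k t iy iu) := by
  refine IsLeast.csInf_eq ⟨⟨γ k, ?_⟩, ?_⟩
  · rw [splice_self, updStrat_eq_self]
    exact ⟨hbest.1, rfl⟩
  · rintro _ ⟨g, hg, rfl⟩
    simpa only [splice_splice] using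
      hbest.jcond_le hT hM ht (sAdmissible_of_admissible_updStrat hg)

theorem IsBestResponse.attainsDP [∀ k, Nonempty (Y k)] [∀ k, Fintype (U k)]
    [∀ k, DecidableEq (Y k)] [∀ k, DecidableEq (U k)] (hM : M.IsPMF) :
    AttainsDP n T M γ k (Vval n T M γ k) := by
  have hγ := hbest.1
  have hV : ∀ t ≤ n, ∀ y u, Vval n T M γ k t y u =
      condExpect n M γ (InfoEq T γ k t y u) (costOn M γ (Finset.Icc t n)) := fun t ht y u =>
    hbest.vval_eq_jcond hT hM ht
  refine ⟨fun iy iu _ => ?_, fun t iy iu ht _ => ?_⟩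
  · rw [hV n le_rfl, dpStage_own_eq_condExpect hT hγ le_rfl]
    exact condExpect_congr fun ω _ => by rw [costOn, Finset.Icc_self, Finset.sum_singleton]
  have hVinfo : ∀ y u y' u', SameInfo T k (t + 1) y u y' u' →
      Vval n T M γ k (t + 1) y u = Vval n T M γ k (t + 1) y' u' := fun y u y' u' h => by
    rw [hV _ ht, hV _ ht, infoEq_congr h]
  have htower : (condExpect n M γ (InfoEq T γ k t iy iu) fun ω =>
      Vval n T M γ k (t + 1) (obsPath ω) (actAt γ ω)) =
      condExpect n M γ (InfoEq T γ k t iy iu) (costOn M γ (Finset.Icc (t + 1) n)) := by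
    simp only [hV (t + 1) ht]
    exact congrArg (· / _) <| expectOn_condExpect_infoEq hM (fun ω ω' h =>
      ⟨(SameInfo.mono t.le_succ h).symm.trans, (SameInfo.mono t.le_succ h).trans⟩) _
  rw [hV t ht.le, costOn_Icc_eq_add ht.le, condExpect_add, ← htower,
    dpStage_own_eq_condExpect hT hγ ht.le, dpCont_own_eq_condExpect hT hM hγ ht hVinfo]

end ValueProcess

section TerminalMinimizer

theorem Xi_terminal_congr_strat (hT : 1 ≤ T) (hγ : Causal γ) (hγ' : Causal γ')
    (h : ∀ s < n, ∀ j, γ j s = γ' j s) : Xi n T M γ k n iy iu = Xi n T M γ' k n iy iu := by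
  have hact := fun ω : Traj n X Y => hγ.actAt_congr_strat hγ' h ω
  have hpriv : ∀ ly lu, PrivOthersEq (n := n) (X := X) T γ k n ly lu =
      PrivOthersEq T γ' k n ly lu := fun ly lu => funext fun ω =>
    congrArg (_ ∧ ·) <| propext <| forall₄_congr fun s j _ hs => by rw [hact ω s hs]
  have hPr : ∀ A : Traj n X Y → Prop, Pr n M γ A = Pr n M γ' A := fun A => by
    simp only [Pr, prob_congr (hact _)]
  funext x ly lu
  simp only [Xi, condPr, hpriv, infoEq_congr_strat hT hγ hγ' h, hPr]

variable [∀ k, Nonempty (Y k)] [∀ k, Fintype (U k)] [∀ k, DecidableEq (Y k)]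
  [∀ k, DecidableEq (U k)]

/-- Station `k` minimizes the expected stage cost under its private posterior at every time. -/
noncomputable def stageMinimizer (n T : ℕ) (M : Kernels X Y U) (γ : Strat Y U) (k : Fin K) :
    SStrat Y U k :=
  fun t y u => argmin (dpStage n T M γ k t y u)

/-- Station `k` follows `γ` before the horizon and `stageMinimizer` from then on. -/
noncomputable def minimizeTerminal (n T : ℕ) (M : Kernels X Y U) (γ : Strat Y U) (k : Fin K) :
    SStrat Y U k :=
  splice (γ k) (stageMinimizer n T M γ k) n

theorem sAdmissible_stageMinimizer (n : ℕ) (M : Kernels X Y U) (hγ : Admissible T γ) (k : Fin K) :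
    SAdmissible T k (stageMinimizer n T M γ k) := by
  intro t y y' u u' hy hu hyk huk
  refine congrArg argmin (dpStage_congr_of_Xi_eq hγ (fun x ly lu => ?_) hy hu)
  rw [Xi, infoEq_congr ⟨hy, hu, hyk, huk⟩]
  rfl

theorem sAdmissible_minimizeTerminal (n : ℕ) (M : Kernels X Y U) (hγ : Admissible T γ)
    (k : Fin K) : SAdmissible T k (minimizeTerminal n T M γ k) :=
  (hγ.station k).splice (sAdmissible_stageMinimizer n M hγ k) n

theorem expectOn_dpStage (hT : 1 ≤ T) (hM : M.IsPMF) (hγ : Admissible T γ) (ht : t ≤ n)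
    {g : SStrat Y U k} (hg : SAdmissible T k g) :
    (expectOn n M γ (fun _ => True) fun ω =>
        dpStage n T M γ k t (obsPath ω) (actAt γ ω) (g t (obsPath ω) (actAt γ ω))) =
      expectOn n M γ (fun _ => True) fun ω => M.cost t (stateAt ω t)
        (Function.update (actAt γ ω t) k (g t (obsPath ω) (actAt γ ω))) := by
  refine Eq.trans (expectOn_congr fun ω _ => ?_)
    (expectOn_condExpect_infoEq (T := T) (k := k) (t := t) hM (fun _ _ _ => Iff.rfl) _)
  rw [dpStage_eq_condExpect (hγ.causal hT) ht]
  refine condExpect_congr fun ω' hω' => ?_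
  have hact : g t (obsPath ω') (actAt γ ω') = g t (obsPath ω) (actAt γ ω) :=
    hg.eq_of_sameInfo hω'
  rw [hact]

theorem J_updStrat_splice_terminal (hT : 1 ≤ T) (hM : M.IsPMF) (hγ : Admissible T γ)
    {g : SStrat Y U k} (hg : SAdmissible T k g) :
    J n M (updStrat γ k (splice (γ k) g n)) =
      expectOn n M γ (fun _ => True) (costOn M γ (Finset.range n)) +
        expectOn n M γ (fun _ => True) fun ω =>
          dpStage n T M γ k n (obsPath ω) (actAt γ ω) (g n (obsPath ω) (actAt γ ω)) := by
  have hγ' := hγ.updStrat ((hγ.station k).splice hg n)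
  have hact : ∀ ω : Traj n X Y, ∀ s < n,
      actAt (updStrat γ k (splice (γ k) g n)) ω s = actAt γ ω s :=
    (hγ'.causal hT).actAt_congr_strat (hγ.causal hT) fun _ hs j => updStrat_splice_of_lt γ g hs j
  rw [expectOn_dpStage hT hM hγ le_rfl hg, ← expectOn_add, J_eq_expectOn]
  refine expectOn_congr_actAt (fun ω _ => hact ω) fun ω _ => ?_
  rw [costOn, Finset.sum_range_succ, actAt_updStrat_splice_self hT hγ hg]
  exact congrArg (· + _) (costOn_congr fun s hs => hact ω s (Finset.mem_range.1 hs))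

theorem J_minimizeTerminal_le (hT : 1 ≤ T) (hM : M.IsPMF) (hγ : Admissible T γ) (k : Fin K) :
    J n M (updStrat γ k (minimizeTerminal n T M γ k)) ≤ J n M γ :=
  calc J n M (updStrat γ k (minimizeTerminal n T M γ k))
      ≤ J n M (updStrat γ k (splice (γ k) (γ k) n)) := by
        rw [minimizeTerminal, J_updStrat_splice_terminal hT hM hγ
          (sAdmissible_stageMinimizer n M hγ k),
          J_updStrat_splice_terminal hT hM hγ (hγ.station k)]
        exact add_le_add_right (expectOn_mono hM γ _ fun ω => argmin_le _ _) _
    _ = J n M γ := by rw [splice_self, updStrat_eq_self]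

theorem IsBestResponse.minimizeTerminal (hT : 1 ≤ T) (hM : M.IsPMF)
    (hbest : IsBestResponse n T M γ k) :
    IsBestResponse n T M (updStrat γ k (minimizeTerminal n T M γ k)) k := by
  refine ⟨hbest.1.updStrat (sAdmissible_minimizeTerminal n M hbest.1 k), fun g hg => ?_⟩
  rw [updStrat_updStrat] at hg ⊢
  exact (J_minimizeTerminal_le hT hM hbest.1 k).trans (hbest.2 g hg)

theorem minimizeTerminal_congr_of_Xi_eq (hT : 1 ≤ T) (hγ : Admissible T γ)
    {y y' : ℕ → ∀ j, Y j} {u u' : ℕ → ∀ j, U j}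
    (hXi : ∀ x ly lu, Xi n T M (updStrat γ k (minimizeTerminal n T M γ k)) k n y u x ly lu =
      Xi n T M (updStrat γ k (minimizeTerminal n T M γ k)) k n y' u' x ly lu)
    (hy : ∀ s (j : Fin K), s + T ≤ n → y s j = y' s j)
    (hu : ∀ s (j : Fin K), s + T ≤ n → u s j = u' s j) :
    minimizeTerminal n T M γ k n y u = minimizeTerminal n T M γ k n y' u' := by
  have hγ' := hγ.updStrat (sAdmissible_minimizeTerminal n M hγ k)
  simp only [Xi_terminal_congr_strat hT (hγ'.causal hT) (hγ.causal hT) fun _ hs j =>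
    updStrat_splice_of_lt γ _ hs j] at hXi
  simp only [minimizeTerminal, splice, lt_irrefl, if_false]
  exact congrArg argmin (dpStage_congr_of_Xi_eq hγ hXi hy hu)

end TerminalMinimizer

end BestResponse

theorem DP_minimum_in_semi_separated_class_general
    {X : Type} [Fintype X] {K : ℕ} {Y U : Fin K → Type}
    [∀ k, Fintype (Y k)] [∀ k, DecidableEq (Y k)] [∀ k, Nonempty (Y k)]
    [∀ k, Fintype (U k)] [∀ k, DecidableEq (U k)] [∀ k, Nonempty (U k)]
    (n : ℕ) {T : ℕ} (hT : 1 ≤ T) {M : Kernels X Y U} (hM : M.IsPMF)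
    {γ : Strat Y U} (hγ : Admissible T γ) (k : Fin K) :
    ∃ g : SStrat Y U k,
      Admissible T (updStrat γ k g) ∧
      (∀ (y y' : ℕ → ∀ j, Y j) (u u' : ℕ → ∀ j, U j),
        (∀ x ly lu, Xi n T M (updStrat γ k g) k n y u x ly lu =
          Xi n T M (updStrat γ k g) k n y' u' x ly lu) →
        (∀ s (j : Fin K), s + T ≤ n → y s j = y' s j) →
        (∀ s (j : Fin K), s + T ≤ n → u s j = u' s j) →
        g n y u = g n y' u') ∧
      (∀ t, t < n →
        ∀ (y y' : ℕ → ∀ j, Y j) (u u' : ℕ → ∀ j, U j),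
          (∀ x ly lu, Xi n T M (updStrat γ k g) k t y u x ly lu =
            Xi n T M (updStrat γ k g) k t y' u' x ly lu) →
          (∀ s (j : Fin K), s + T ≤ t → y s j = y' s j) →
          (∀ s (j : Fin K), s + T ≤ t → u s j = u' s j) →
          (∀ s, s ≤ t → t < s + T → y s k = y' s k) →
          (∀ s, s < t → t < s + T → u s k = u' s k) →
          g t y u = g t y' u') ∧
      AttainsDP n T M (updStrat γ k g) k (Vval n T M (updStrat γ k g) k) ∧
      ∀ h : SStrat Y U k, Admissible T (updStrat γ k h) →
        J n M (updStrat γ k g) ≤ J n M (updStrat γ k h) := by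
  obtain ⟨g₀, hbest⟩ := exists_isBestResponse n M hγ k
  have hmin := hbest.minimizeTerminal hT hM
  set g := minimizeTerminal n T M (updStrat γ k g₀) k
  rw [updStrat_updStrat] at hmin
  have hg := sAdmissible_of_admissible_updStrat hmin.1
  refine ⟨g, hmin.1, fun y y' u u' hXi hy hu => ?_, fun t _ y y' u u' _ hy hu hyk huk => ?_,
    hmin.attainsDP hT hM, fun h hh => ?_⟩
  · rw [← updStrat_updStrat γ k g₀ g] at hXi
    exact minimizeTerminal_congr_of_Xi_eq hT hbest.1 hXi hy hu
  · exact hg.eq_of_sameInfo (SameInfo.of_common_of_window hy hu hyk huk)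
  · simpa only [updStrat_updStrat] using hmin.2 h (by rwa [updStrat_updStrat])

/-!  STATEMENT 11 (Theorem 3 (1.2): the minimization in the dynamic programming equations
is achieved within the class of semi-separated strategies; `(Ξ_t^k[I_t^k], Δ_t^{(K)},
Λ_t^k)` is a sufficient statistic, and at the terminal time `(Ξ_n^k[i_n^k], δ_n^{(K)})`
suffices). -/

/-- Suppose a PbP optimal profile `γ^{(K),o}` exists.  Then for each station `k` there is
a strategy `g` of station `k` which is semi-separated — at the terminal time its action
depends on `i_n^k` only through `(Ξ_n^k[i_n^k], δ_n^{(K)})`, and for `t < n` only through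
`(Ξ_t^k[i_t^k], δ_t^{(K)}, λ_t^k)` — attains the minimum in the dynamic programming
equations at every realization of positive probability, and is optimal for station `k`
against `γ^{-k,o}`. -/
theorem DP_minimum_in_semi_separated_class
    {X : Type} [Fintype X] [DecidableEq X] [Nonempty X]
    {K : ℕ} {Y U : Fin K → Type}
    [∀ k, Fintype (Y k)] [∀ k, DecidableEq (Y k)] [∀ k, Nonempty (Y k)]
    [∀ k, Fintype (U k)] [∀ k, DecidableEq (U k)] [∀ k, Nonempty (U k)]
    (n T : ℕ) (hT : 1 ≤ T) (hTn : T ≤ n)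
    (M : Kernels X Y U) (hM : M.IsPMF)
    (γo : Strat Y U) (hopt : PbPOptimal n T M γo) (k : Fin K) :
    ∃ g : SStrat Y U k,
      Admissible T (updStrat γo k g) ∧
      -- terminal time: `u_n^{k,o} = γ_n^{k,o}(ξ_n^k[i_n^k], δ_n^{(K)})`
      (∀ (y y' : ℕ → ∀ j, Y j) (u u' : ℕ → ∀ j, U j),
        (∀ x ly lu, Xi n T M (updStrat γo k g) k n y u x ly lu =
          Xi n T M (updStrat γo k g) k n y' u' x ly lu) →
        (∀ s (j : Fin K), s + T ≤ n → y s j = y' s j) →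
        (∀ s (j : Fin K), s + T ≤ n → u s j = u' s j) →
        g n y u = g n y' u') ∧
      -- `t < n`: `u_t^{k,o} = γ_t^{k,o}(ξ_t^k[i_t^k], δ_t^{(K)}, λ_t^k)`
      (∀ t, t < n →
        ∀ (y y' : ℕ → ∀ j, Y j) (u u' : ℕ → ∀ j, U j),
          (∀ x ly lu, Xi n T M (updStrat γo k g) k t y u x ly lu =
            Xi n T M (updStrat γo k g) k t y' u' x ly lu) →
          (∀ s (j : Fin K), s + T ≤ t → y s j = y' s j) →
          (∀ s (j : Fin K), s + T ≤ t → u s j = u' s j) →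
          (∀ s, s ≤ t → t < s + T → y s k = y' s k) →
          (∀ s, s < t → t < s + T → u s k = u' s k) →
          g t y u = g t y' u') ∧
      -- `g` attains the minimum in the dynamic programming equations
      AttainsDP n T M (updStrat γo k g) k (Vval n T M (updStrat γo k g) k) ∧
      -- and is optimal for station `k` against the fixed optimal responses `γ^{-k,o}`
      (∀ h : SStrat Y U k, Admissible T (updStrat γo k h) →
        J n M (updStrat γo k g) ≤ J n M (updStrat γo k h)) ∧
      J n M (updStrat γo k g) = J n M γo := by
  obtain ⟨g, hg, hterminal, hrunning, hDP, hle⟩ :=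
    DP_minimum_in_semi_separated_class_general n hT hM hopt.1 k
  have hle_self : J n M (updStrat γo k g) ≤ J n M γo := by
    simpa only [updStrat_eq_self] using
      hle (γo k) ((updStrat_eq_self γo k).symm ▸ hopt.1)
  exact ⟨g, hg, hterminal, hrunning, hDP, hle, hle_self.antisymm (hopt.2 k g hg)⟩

end DelayedSharing
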